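/- arXiv:1806.09726 — 2 statements merged into one kernel-verified Lean document; each statement's English description precedes it below -/
import Mathlib

section
/- There exist constants c, C > 0 such that for all p ∈ (0,1): c·p^(−3/2) ≤ f(K₃,p) ≤ C·p^(−3/2), c·p^(−2) ≤ f(K₄,p) ≤ C·p^(−2), and c·p^(−8/3) ≤ f(K₅,p) ≤ C·p^(−8/3). -/
open scoped Classical

namespace OnlineRamseyGame

/-- A valid Builder strategy: it never builds a loop, and along any play the
edges built are pairwise distinct. -/
def ValidBuilder {V : Type*} (B : List Bool → Sym2 V) : Prop :=
  (∀ h : List Bool, ¬ (B h).IsDiag) ∧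
  ∀ h : List Bool, ∀ i : ℕ, i < h.length → B (h.take i) ≠ B h

/-- The history (as a list) of the first `t` values of the color sequence `x`. -/
def histSeq (x : ℕ → Bool) (t : ℕ) : List Bool := (List.range t).map x

/-- Extend a finite color sequence to an infinite one (by `false`). -/
def extSeq {N : ℕ} (x : Fin N → Bool) : ℕ → Bool :=
  fun t => if h : t < N then x ⟨t, h⟩ else false

/-- The probability of the outcome `x` when each turn is independently `true`
with probability `p` and `false` with probability `1 - p`. -/
noncomputable def weight (p : ℝ) {N : ℕ} (x : Fin N → Bool) : ℝ :=
  ∏ i, if x i then p else 1 - p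

/-- The graph of successful queries (within the first `N` queries) contains a
copy of `H`. -/
def ContainsCopy {V : Type*} (H : SimpleGraph V) (edge : ℕ → Sym2 ℕ)
    (x : ℕ → Bool) (N : ℕ) : Prop :=
  ∃ f : V → ℕ, Function.Injective f ∧
    ∀ u v : V, H.Adj u v → ∃ t, t < N ∧ edge t = s(f u, f v) ∧ x t = true

/-- The probability that strategy `Q` finds a copy of `H` within `N` queries in
the Subgraph Query Game with parameter `p`. -/
noncomputable def queryProb {V : Type*} (H : SimpleGraph V)
    (Q : List Bool → Sym2 ℕ) (N : ℕ) (p : ℝ) : ℝ :=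
  ∑ x : Fin N → Bool, weight p x *
    (if ContainsCopy H (fun t => Q (histSeq (extSeq x) t)) (extSeq x) N then 1 else 0)

/-- `f(H,p)`: the least `N` such that some valid strategy finds a copy of `H`
within `N` queries with probability at least `1/2`. -/
noncomputable def fQuery {V : Type*} (H : SimpleGraph V) (p : ℝ) : ℕ :=
  sInf {N | ∃ Q : List Bool → Sym2 ℕ, ValidBuilder Q ∧ (1 : ℝ) / 2 ≤ queryProb H Q N p}

/-- The complete graph on `m` vertices. -/
abbrev K (m : ℕ) : SimpleGraph (Fin m) := ⊤

/-! ### Expectation over histories -/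

/-- Expectation of `F` over `n` independent Bernoulli answers. -/
noncomputable def Ee (p : ℝ) : ℕ → (List Bool → ℝ) → ℝ
  | 0, F => F []
  | n + 1, F => p * Ee p n (fun h => F (true :: h)) + (1 - p) * Ee p n (fun h => F (false :: h))

theorem sum_weight_eq (p : ℝ) (n : ℕ) : ∀ F : List Bool → ℝ,
    ∑ x : Fin n → Bool, weight p x * F (List.ofFn x) = Ee p n F := by
  induction n with
  | zero => intro F; simp [weight, Ee]
  | succ n ih =>
    intro F
    rw [← (Fin.consEquiv (fun _ : Fin (n+1) => Bool)).sum_comp, Fintype.sum_prod_type]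
    simp only [Fintype.sum_bool, Ee, ← ih, Finset.mul_sum]
    simp [weight, Fin.prod_univ_succ, Fin.consEquiv, mul_assoc]

theorem Ee_mono {p : ℝ} (h0 : 0 ≤ p) (h1 : p ≤ 1) (n : ℕ) : ∀ {F G : List Bool → ℝ},
    (∀ h, h.length = n → F h ≤ G h) → Ee p n F ≤ Ee p n G := by
  induction n with
  | zero => intro F G h; exact h [] rfl
  | succ n ih =>
    intro F G h
    have h2 : 0 ≤ 1 - p := by linarith
    simp only [Ee]
    gcongr
    · exact ih fun l hl => h _ (by simp [hl])
    · exact ih fun l hl => h _ (by simp [hl])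

theorem Ee_const (p c : ℝ) (n : ℕ) : Ee p n (fun _ => c) = c := by
  induction n with
  | zero => rfl
  | succ n ih => simp only [Ee, ih]; ring

theorem Ee_add (p : ℝ) (n : ℕ) : ∀ (F G : List Bool → ℝ),
    Ee p n (fun h => F h + G h) = Ee p n F + Ee p n G := by
  induction n with
  | zero => intro F G; rfl
  | succ n ih => intro F G; simp only [Ee, ih]; ring

theorem Ee_mul (p c : ℝ) (n : ℕ) : ∀ (F : List Bool → ℝ),
    Ee p n (fun h => c * F h) = c * Ee p n F := by
  induction n with
  | zero => intro F; rfl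
  | succ n ih => intro F; simp only [Ee, ih]; ring

theorem Ee_sum {ι : Type*} (p : ℝ) (n : ℕ) (s : Finset ι) (F : ι → List Bool → ℝ) :
    Ee p n (fun h => ∑ i ∈ s, F i h) = ∑ i ∈ s, Ee p n (F i) := by
  induction s using Finset.induction_on with
  | empty => simpa using Ee_const p 0 n
  | insert a s ha ih => simp only [Finset.sum_insert ha, Ee_add, ih]

/-- list of successful queries, in order -/
def succL : (List Bool → Sym2 ℕ) → List Bool → List (Sym2 ℕ)
  | _, [] => []
  | Q, b :: h => if b then Q [] :: succL (fun l => Q (b :: l)) h else succL (fun l => Q (b :: l)) h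

theorem mem_succL (e : Sym2 ℕ) (h : List Bool) : ∀ Q : List Bool → Sym2 ℕ,
    e ∈ succL Q h ↔ ∃ t, t < h.length ∧ Q (h.take t) = e ∧ h[t]? = some true := by
  induction h with
  | nil => intro Q; simp [succL]
  | cons b h ih =>
    intro Q
    have key : (∃ t, t < (b :: h).length ∧ Q ((b :: h).take t) = e ∧ (b :: h)[t]? = some true) ↔
        ((Q [] = e ∧ b = true) ∨
          ∃ t, t < h.length ∧ Q (b :: h.take t) = e ∧ h[t]? = some true) := by
      constructor
      · rintro ⟨t, ht, h1, h2⟩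
        cases t with
        | zero => left; exact ⟨by simpa using h1, by simpa using h2⟩
        | succ t => right; exact ⟨t, by simpa using ht, by simpa using h1, by simpa using h2⟩
      · rintro (⟨h1, h2⟩ | ⟨t, ht, h1, h2⟩)
        · exact ⟨0, by simp, by simpa using h1, by simpa using h2⟩
        · exact ⟨t + 1, by simpa using ht, by simpa using h1, by simpa using h2⟩
    rw [key, succL, ← ih (fun l => Q (b :: l))]
    cases b <;> simp [eq_comm]

/-- the set of edges contains a copy of `K m` -/
def Has (m : ℕ) (G : Set (Sym2 ℕ)) : Prop :=
  ∃ f : Fin m → ℕ, Function.Injective f ∧ ∀ u v : Fin m, u ≠ v → s(f u, f v) ∈ G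

theorem Has.mono {m : ℕ} {G G' : Set (Sym2 ℕ)} (h : G ⊆ G') : Has m G → Has m G' := by
  rintro ⟨f, hf, h2⟩; exact ⟨f, hf, fun u v huv => h (h2 u v huv)⟩

theorem histSeq_take {N : ℕ} (x : Fin N → Bool) (t : ℕ) (ht : t ≤ N) :
    histSeq (extSeq x) t = (List.ofFn x).take t := by
  apply List.ext_getElem
  · simp [histSeq, ht]
  · intro i h1 h2
    simp [histSeq] at h1
    simp [histSeq, extSeq, show i < N by omega]

theorem containsCopy_iff {m N : ℕ} (Q : List Bool → Sym2 ℕ) (x : Fin N → Bool) :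
    ContainsCopy (K m) (fun t => Q (histSeq (extSeq x) t)) (extSeq x) N ↔
      Has m {e | e ∈ succL Q (List.ofFn x)} := by
  unfold ContainsCopy Has
  refine exists_congr fun f => and_congr_right fun _ => forall_congr' fun u => forall_congr' fun v => ?_
  simp only [SimpleGraph.top_adj, Set.mem_ofPred_eq, mem_succL, List.length_ofFn]
  refine imp_congr_right fun _ => exists_congr fun t => and_congr_right fun ht => ?_
  rw [histSeq_take x t ht.le]
  simp [extSeq, ht]

theorem queryProb_eq (m N : ℕ) (Q : List Bool → Sym2 ℕ) (p : ℝ) :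
    queryProb (K m) Q N p =
      Ee p N (fun h => if Has m {e | e ∈ succL Q h} then 1 else 0) := by
  rw [← sum_weight_eq]
  unfold queryProb
  refine Finset.sum_congr rfl fun x _ => ?_
  simp only [containsCopy_iff]

theorem ValidBuilder.shift {V : Type*} {Q : List Bool → Sym2 V} (h : ValidBuilder Q) (b : Bool) :
    ValidBuilder (fun l => Q (b :: l)) := by
  refine ⟨fun l => h.1 _, fun l i hi => ?_⟩
  have := h.2 (b :: l) (i + 1) (by simpa using hi)
  simpa using this

theorem ValidBuilder.head_ne {V : Type*} {Q : List Bool → Sym2 V} (h : ValidBuilder Q) (b : Bool)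
    (l : List Bool) : Q [] ≠ Q (b :: l) := by
  have := h.2 (b :: l) 0 (by simp)
  simpa using this

/-! ### A program logic for strategies -/

/-- From a state with forbidden pairs `S` and successful pairs `G`, Builder can get a `K m` within
`n` more queries with probability at least `r`. -/
inductive Win (p : ℝ) (m : ℕ) : ℕ → Set (Sym2 ℕ) → Set (Sym2 ℕ) → ℝ → Prop
  | done {n : ℕ} {S G : Set (Sym2 ℕ)} {r : ℝ} : Has m G → r ≤ 1 → Win p m n S G r
  | zero {n : ℕ} {S G : Set (Sym2 ℕ)} {r : ℝ} : r ≤ 0 → Win p m n S G r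
  | step {n : ℕ} {S G : Set (Sym2 ℕ)} {r r1 r0 : ℝ} (e : Sym2 ℕ) : e ∉ S → ¬ e.IsDiag →
      Win p m n (insert e S) (insert e G) r1 → Win p m n (insert e S) G r0 →
      r ≤ p * r1 + (1 - p) * r0 → Win p m (n + 1) S G r

theorem Win.mono {p : ℝ} {m n : ℕ} {S G : Set (Sym2 ℕ)} {r : ℝ} (h : Win p m n S G r) :
    ∀ {n' : ℕ} {S' G' : Set (Sym2 ℕ)} {r' : ℝ}, n ≤ n' → S' ⊆ S → G ⊆ G' → r' ≤ r →
      Win p m n' S' G' r' := by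
  induction h with
  | done h1 h2 => intro n' S' G' r' _ _ hG hr; exact .done (h1.mono hG) (hr.trans h2)
  | zero h1 => intro n' S' G' r' _ _ hG hr; exact .zero (hr.trans h1)
  | step e h1 h2 _ _ h5 ih1 ih0 =>
    intro n' S' G' r' hn hS hG hr
    obtain ⟨k, rfl⟩ : ∃ k, n' = k + 1 := ⟨n' - 1, by omega⟩
    exact .step e (fun h => h1 (hS h)) h2
      (ih1 (by omega) (Set.insert_subset_insert hS) (Set.insert_subset_insert hG) le_rfl)
      (ih0 (by omega) (Set.insert_subset_insert hS) hG le_rfl) (hr.trans h5)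

theorem exists_default (T : Finset (Sym2 ℕ)) :
    ∃ B : List Bool → Sym2 ℕ, ValidBuilder B ∧ ∀ h, B h ∉ T := by
  obtain ⟨M, hM⟩ : ∃ M : ℕ, ∀ e ∈ T, ∀ v ∈ e, v < M := by
    refine ⟨(T.biUnion fun e => e.toFinset).sup id + 1, fun e he v hv => ?_⟩
    have : v ∈ T.biUnion fun e => e.toFinset := by
      simp only [Finset.mem_biUnion, Sym2.mem_toFinset]; exact ⟨e, he, hv⟩
    have := Finset.le_sup (f := id) this
    simp only [id] at this ⊢
    omega
  refine ⟨fun h => s(M, M + 1 + h.length), ⟨fun h => ?_, fun h i hi => ?_⟩, fun h hh => ?_⟩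
  · simp; omega
  · simp; omega
  · exact absurd (hM _ hh M (by simp)) (lt_irrefl _)

theorem Win.sound {p : ℝ} (h0 : 0 ≤ p) (h1 : p ≤ 1) {m n : ℕ} {S G : Set (Sym2 ℕ)} {r : ℝ}
    (h : Win p m n S G r) : ∀ T : Finset (Sym2 ℕ), (T : Set (Sym2 ℕ)) ⊆ S →
      ∃ B : List Bool → Sym2 ℕ, ValidBuilder B ∧ (∀ h, B h ∉ T) ∧
        r ≤ Ee p n (fun h => if Has m (G ∪ {e | e ∈ succL B h}) then 1 else 0) := by
  induction h with
  | @done n S G r hH hr =>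
    intro T _
    obtain ⟨B, hB, hB2⟩ := exists_default T
    refine ⟨B, hB, hB2, ?_⟩
    have : ∀ X : Set (Sym2 ℕ), Has m (G ∪ X) := fun X => hH.mono Set.subset_union_left
    simp only [this, if_true, Ee_const, hr]
  | @zero n S G r hr =>
    intro T _
    obtain ⟨B, hB, hB2⟩ := exists_default T
    refine ⟨B, hB, hB2, hr.trans ?_⟩
    refine (Ee_const p 0 n).symm.le.trans ?_
    refine Ee_mono h0 h1 n fun h _ => ?_
    split_ifs <;> norm_num
  | @step n S G r r1 r0 e he hd _ _ hr ih1 ih0 =>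
    intro T hT
    have hT' : ((insert e T : Finset (Sym2 ℕ)) : Set (Sym2 ℕ)) ⊆ insert e S := by
      rw [Finset.coe_insert]; exact Set.insert_subset_insert hT
    obtain ⟨B1, hB1, hT1, hr1⟩ := ih1 _ hT'
    obtain ⟨B0, hB0, hT0, hr0⟩ := ih0 _ hT'
    let B : List Bool → Sym2 ℕ := fun l => match l with
      | [] => e
      | true :: l => B1 l
      | false :: l => B0 l
    refine ⟨B, ⟨fun l => ?_, fun l i hi => ?_⟩, fun l => ?_, ?_⟩
    · match l with
      | [] => exact hd
      | true :: l => exact hB1.1 l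
      | false :: l => exact hB0.1 l
    · match l, i, hi with
      | true :: l, 0, _ => exact fun hh => hT1 l (by rw [← show e = B1 l from hh]; simp)
      | false :: l, 0, _ => exact fun hh => hT0 l (by rw [← show e = B0 l from hh]; simp)
      | true :: l, i + 1, hi => exact hB1.2 l i (by simpa using hi)
      | false :: l, i + 1, hi => exact hB0.2 l i (by simpa using hi)
    · match l with
      | [] => exact fun hh => he (hT hh)
      | true :: l => exact fun hh => hT1 l (Finset.mem_insert_of_mem hh)
      | false :: l => exact fun hh => hT0 l (Finset.mem_insert_of_mem hh)
    · refine hr.trans ?_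
      have h2 : 0 ≤ 1 - p := by linarith
      simp only [Ee]
      gcongr
      · refine hr1.trans (le_of_eq ?_)
        congr 1; ext l
        have : insert e G ∪ {x | x ∈ succL B1 l} = G ∪ {x | x ∈ succL B (true :: l)} := by
          ext x
          simp only [succL, B, if_true, Set.mem_union, Set.mem_insert_iff, Set.mem_ofPred_eq,
            List.mem_cons]
          tauto
        rw [this]
      · refine hr0.trans (le_of_eq ?_)
        congr 1

theorem Win.query {p : ℝ} (h0 : 0 ≤ p) (h1 : p ≤ 1) {m n : ℕ} {r : ℝ}
    (h : Win p m n ∅ ∅ r) :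
    ∃ Q : List Bool → Sym2 ℕ, ValidBuilder Q ∧ r ≤ queryProb (K m) Q n p := by
  obtain ⟨B, hB, -, hr⟩ := h.sound h0 h1 ∅ (by simp)
  refine ⟨B, hB, ?_⟩
  rw [queryProb_eq]
  simpa using hr

/-! ### Search primitives -/

/-- Query the fresh pairs in `A` until a success. -/
theorem Win.find {p : ℝ} (hp0 : 0 ≤ p) (hp1 : p ≤ 1) {m n0 : ℕ} {G : Set (Sym2 ℕ)} {r1 r0 : ℝ}
    (A : Finset (Sym2 ℕ)) :
    ∀ (S : Set (Sym2 ℕ)), (∀ e ∈ A, e ∉ S ∧ ¬ e.IsDiag) →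
      (∀ e ∈ A, Win p m n0 (S ∪ A) (insert e G) r1) → Win p m n0 (S ∪ A) G r0 →
      Win p m (n0 + A.card) S G ((1 - (1 - p) ^ A.card) * r1 + (1 - p) ^ A.card * r0) := by
  induction A using Finset.induction_on with
  | empty => intro S _ _ h0; simpa using h0
  | insert a A ha ih =>
    intro S hS h1 h0
    have hSA : S ∪ ((insert a A : Finset (Sym2 ℕ)) : Set (Sym2 ℕ)) = insert a S ∪ A := by
      ext x; simp; tauto
    rw [hSA] at h1 h0
    have h2 := ih (insert a S) (fun e he => ⟨?_, (hS e (by simp [he])).2⟩)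
      (fun e he => h1 e (by simp [he])) h0
    · rw [Finset.card_insert_of_notMem ha]
      refine .step a (hS a (by simp)).1 (hS a (by simp)).2
        ((h1 a (by simp)).mono (Nat.le_add_right _ _) Set.subset_union_left le_rfl le_rfl) h2 ?_
      apply le_of_eq; ring
    · rintro (rfl | h)
      · exact ha he
      · exact (hS e (by simp [he])).1 h

/-- The star with centre `v` and leaves `A`. -/
def star (v : ℕ) (A : Finset ℕ) : Set (Sym2 ℕ) := {e | ∃ x ∈ A, e = s(v, x)}

theorem mem_star {v : ℕ} {A : Finset ℕ} {e : Sym2 ℕ} : e ∈ star v A ↔ ∃ x ∈ A, e = s(v, x) :=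
  Iff.rfl

theorem star_insert (v a : ℕ) (A : Finset ℕ) : star v (insert a A) = insert s(v, a) (star v A) := by
  ext e; simp [mem_star]

/-- Collect `k` leaves among the candidates `A`. -/
theorem Win.collect {p : ℝ} (hp0 : 0 ≤ p) (hp1 : p ≤ 1) {m n0 : ℕ} {r1 r0 : ℝ} (h01 : r0 ≤ r1)
    (v : ℕ) (A : Finset ℕ) : ∀ (k : ℕ) (S G : Set (Sym2 ℕ)),
      v ∉ A → (∀ x ∈ A, s(v, x) ∉ S) →
      (∀ W ⊆ A, W.card = k → Win p m n0 (S ∪ star v A) (G ∪ star v W) r1) →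
      Win p m n0 (S ∪ star v A) G r0 →
      Win p m (n0 + A.card) S G (r0 + (r1 - r0) * (1 - 2 ^ k * (1 - p / 2) ^ A.card)) := by
  have hq : 0 ≤ 1 - p / 2 := by linarith
  induction A using Finset.induction_on with
  | empty =>
    intro k S G hv hS h1 h0
    rcases Nat.eq_zero_or_pos k with rfl | hk
    · have := h1 ∅ (by simp) (by simp)
      refine h0.mono (by simp) (by simp) le_rfl ?_
      simp
    · refine h0.mono (by simp) (by simp) le_rfl ?_
      have : (1 : ℝ) ≤ 2 ^ k := one_le_pow₀ (by norm_num)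
      simp only [Finset.card_empty, pow_zero, mul_one]
      nlinarith
  | insert a A ha ih =>
    intro k S G hv hS h1 h0
    rcases Nat.eq_zero_or_pos k with rfl | hk
    · refine (h1 ∅ (by simp) (by simp)).mono (by simp) Set.subset_union_left ?_ ?_
      · rintro e (he | ⟨x, hx, -⟩)
        · exact he
        · simp at hx
      · have : 0 ≤ (1 - p / 2) ^ (insert a A).card := pow_nonneg hq _
        nlinarith
    · obtain ⟨k, rfl⟩ : ∃ j, k = j + 1 := ⟨k - 1, by omega⟩
      have hSA : S ∪ star v (insert a A) = insert s(v, a) S ∪ star v A := by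
        ext x; simp [star_insert, or_assoc]
      rw [hSA] at h1 h0
      have hva : v ≠ a := by rintro rfl; simp at hv
      have hvA : v ∉ A := fun h => hv (by simp [h])
      have hfr : ∀ x ∈ A, s(v, x) ∉ insert s(v, a) S := by
        rintro x hx (h | h)
        · simp at h
          rcases h with rfl | ⟨h, -⟩
          · exact ha hx
          · exact hva h
        · exact hS x (by simp [hx]) h
      rw [Finset.card_insert_of_notMem ha]
      refine .step s(v, a) (hS a (by simp)) (by simpa using hva)
        (ih k (insert s(v, a) S) (insert s(v, a) G) hvA hfr (fun W hW hc => ?_)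
          (h0.mono le_rfl le_rfl (Set.subset_insert _ _) le_rfl))
        (ih (k + 1) (insert s(v, a) S) G hvA hfr
          (fun W hW hc => h1 W (hW.trans (Finset.subset_insert _ _)) hc) h0) ?_
      · have := h1 (insert a W) (Finset.insert_subset_insert _ hW)
          (by rw [Finset.card_insert_of_notMem (fun h => ha (hW h)), hc])
        refine this.mono le_rfl le_rfl ?_ le_rfl
        intro x; simp [star_insert, or_assoc]
      · apply le_of_eq; ring

/-- Triangle search inside `A ∪ B`. -/
theorem Win.triangle {p : ℝ} (hp0 : 0 ≤ p) (hp1 : p ≤ 1) {m n0 : ℕ} {r0 : ℝ} (w : ℕ)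
    (Sf G : Set (Sym2 ℕ)) (hf : Win p m n0 Sf G r0) (A : Finset ℕ) :
    ∀ (B : Finset ℕ) (S : Set (Sym2 ℕ)), S ⊆ Sf → Disjoint A B → 2 * w + 2 * A.card ≤ B.card →
      (∀ a ∈ A, ∀ b ∈ B, s(a, b) ∉ S ∧ s(a, b) ∈ Sf) →
      (∀ a ∈ B, ∀ b ∈ B, a ≠ b → s(a, b) ∉ S ∧ s(a, b) ∈ Sf) →
      (∀ a ∈ A, ∀ b ∈ B, ∀ c ∈ B, b ≠ c → ∀ G', G ⊆ G' → s(a, b) ∈ G' → s(a, c) ∈ G' →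
        s(b, c) ∈ G' → Has m G') →
      Win p m (n0 + A.card * (2 * w + 1)) S G
        (1 - (1 - p * (1 - (1 - p) ^ w) ^ 2) ^ A.card * (1 - r0)) := by
  induction A using Finset.induction_on with
  | empty =>
    intro B S hS _ _ _ _ _
    exact hf.mono (by simp) hS le_rfl (by simp)
  | insert a A ha ih =>
    intro B S hS hd hc hAB hBB hT
    rw [Finset.card_insert_of_notMem ha] at hc
    have haB : a ∉ B := fun h => Finset.disjoint_left.1 hd (by simp) h
    have hdA : Disjoint A B := hd.mono_left (Finset.subset_insert _ _)
    obtain ⟨B1, hB1, hB1c⟩ := Finset.exists_subset_card_eq (s := B) (n := w) (by omega)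
    obtain ⟨B2, hB2, hB2c⟩ := Finset.exists_subset_card_eq (s := B \ B1) (n := w)
      (by rw [Finset.card_sdiff_of_subset hB1]; omega)
    have hB2B : B2 ⊆ B := hB2.trans Finset.sdiff_subset
    have h12 : ∀ x ∈ B1, x ∉ B2 := fun x hx hx2 => (Finset.mem_sdiff.1 (hB2 hx2)).2 hx
    set V : ℝ := 1 - (1 - p * (1 - (1 - p) ^ w) ^ 2) ^ A.card * (1 - r0) with hV
    -- the state after any trial with centre `a`
    set S' : Set (Sym2 ℕ) := S ∪ star a B with hS'
    have hfrA : ∀ x ∈ A, ∀ b ∈ B, s(x, b) ∉ S' ∧ s(x, b) ∈ Sf := by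
      intro x hx b hb
      refine ⟨?_, (hAB x (by simp [hx]) b hb).2⟩
      rintro (h | ⟨y, hy, h⟩)
      · exact (hAB x (by simp [hx]) b hb).1 h
      · simp at h
        rcases h with ⟨rfl, -⟩ | ⟨-, rfl⟩
        · exact ha hx
        · exact haB hb
    have hfrB : ∀ x ∈ B, ∀ b ∈ B, x ≠ b → s(x, b) ∉ S' ∧ s(x, b) ∈ Sf := by
      intro x hx b hb hxb
      refine ⟨?_, (hBB x hx b hb hxb).2⟩
      rintro (h | ⟨y, hy, h⟩)
      · exact (hBB x hx b hb hxb).1 h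
      · simp at h
        rcases h with ⟨rfl, -⟩ | ⟨-, rfl⟩
        · exact haB hx
        · exact haB hb
    have hS'f : S' ⊆ Sf := by
      rintro e (h | ⟨y, hy, rfl⟩)
      · exact hS h
      · exact (hAB a (by simp) y hy).2
    have hcont : Win p m (n0 + A.card * (2 * w + 1)) S' G V :=
      ih B S' hS'f hdA (by omega) hfrA hfrB (fun x hx => hT x (by simp [hx]))
    have hpair : ∀ b ∈ B1, ∀ c ∈ B2, Win p m (n0 + A.card * (2 * w + 1) + 1) S'
        (insert s(a, c) (insert s(a, b) G)) (p * 1 + (1 - p) * V) := by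
      intro b hb c hc'
      have hbc : b ≠ c := by rintro rfl; exact h12 _ hb hc'
      have hbB := hB1 hb
      have hcB := hB2B hc'
      refine .step s(b, c) (hfrB b hbB c hcB hbc).1 (by simpa using hbc) (.done ?_ le_rfl)
        (Win.mono (ih ((B.erase b).erase c) (insert s(b, c) S') ?_ ?_ ?_ ?_ ?_ ?_) le_rfl le_rfl ?_ le_rfl) le_rfl
      · refine hT a (by simp) b hbB c hcB hbc _ ?_ ?_ ?_ ?_
        · intro x hx; simp [hx]
        all_goals simp
      · exact Set.insert_subset (hfrB b hbB c hcB hbc).2 hS'f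
      · exact hdA.mono_right ((Finset.erase_subset _ _).trans (Finset.erase_subset _ _))
      · rw [Finset.card_erase_of_mem (by simp [hbc.symm, hcB]), Finset.card_erase_of_mem hbB]
        omega
      · intro x hx y hy
        simp only [Finset.mem_erase] at hy
        refine ⟨?_, (hfrA x hx y hy.2.2).2⟩
        rintro (h | h)
        · simp at h
          rcases h with ⟨-, h⟩ | ⟨-, h⟩
          · exact hy.1 h
          · exact hy.2.1 h
        · exact (hfrA x hx y hy.2.2).1 h
      · intro x hx y hy hxy
        simp only [Finset.mem_erase] at hx hy
        refine ⟨?_, (hfrB x hx.2.2 y hy.2.2 hxy).2⟩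
        rintro (h | h)
        · simp at h
          rcases h with ⟨-, h⟩ | ⟨-, h⟩
          · exact hy.1 h
          · exact hy.2.1 h
        · exact (hfrB x hx.2.2 y hy.2.2 hxy).1 h
      · intro x hx y hy z hz
        simp only [Finset.mem_erase] at hy hz
        exact hT x (by simp [hx]) y hy.2.2 z hz.2.2
      · intro x hx; simp [hx]
    have hinj : Function.Injective (fun x : ℕ => s(a, x)) := by
      intro x y h; simp at h; rcases h with h | ⟨h, h2⟩ <;> omega
    have key1 : ∀ b ∈ B1, Win p m (n0 + A.card * (2 * w + 1) + 1 + w) (S ∪ star a B1)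
        (insert s(a, b) G)
        ((1 - (1 - p) ^ w) * (p * 1 + (1 - p) * V) + (1 - p) ^ w * V) := by
      intro b hb
      have hsub : S ∪ star a B1 ∪ ((B2.image (fun x => s(a, x)) : Finset (Sym2 ℕ)) : Set (Sym2 ℕ)) ⊆ S' := by
        rintro e ((h | ⟨y, hy, rfl⟩) | h)
        · exact Or.inl h
        · exact Or.inr ⟨y, hB1 hy, rfl⟩
        · simp only [Finset.coe_image, Set.mem_image, Finset.mem_coe] at h
          obtain ⟨y, hy, rfl⟩ := h
          exact Or.inr ⟨y, hB2B hy, rfl⟩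
      have := Win.find hp0 hp1 (m := m) (n0 := n0 + A.card * (2 * w + 1) + 1)
        (G := insert s(a, b) G) (r1 := p * 1 + (1 - p) * V) (r0 := V)
        (B2.image (fun x => s(a, x))) (S ∪ star a B1) ?_ ?_ ?_
      · rw [Finset.card_image_of_injective _ hinj, hB2c] at this
        exact this
      · intro e he
        obtain ⟨y, hy, rfl⟩ := Finset.mem_image.1 he
        refine ⟨?_, ?_⟩
        · rintro (h | ⟨z, hz, h⟩)
          · exact (hAB a (by simp) y (hB2B hy)).1 h
          · have := hinj h
            subst this
            exact h12 _ hz hy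
        · simp; rintro rfl; exact haB (hB2B hy)
      · intro e he
        obtain ⟨y, hy, rfl⟩ := Finset.mem_image.1 he
        exact (hpair b hb y hy).mono le_rfl hsub le_rfl le_rfl
      · exact hcont.mono (by omega) hsub (Set.subset_insert _ _) le_rfl
    have hst : ((B1.image (fun x => s(a, x)) : Finset (Sym2 ℕ)) : Set (Sym2 ℕ)) = star a B1 := by
      ext e; simp [mem_star, eq_comm]
    have := Win.find hp0 hp1 (m := m) (n0 := n0 + A.card * (2 * w + 1) + 1 + w)
        (G := G) (r1 := (1 - (1 - p) ^ w) * (p * 1 + (1 - p) * V) + (1 - p) ^ w * V) (r0 := V)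
        (B1.image (fun x => s(a, x))) S ?_ ?_ ?_
    · rw [Finset.card_image_of_injective _ hinj, hB1c] at this
      rw [Finset.card_insert_of_notMem ha]
      refine this.mono (by rw [add_mul]; omega) le_rfl le_rfl ?_
      rw [hV]
      apply le_of_eq
      ring
    · intro e he
      obtain ⟨y, hy, rfl⟩ := Finset.mem_image.1 he
      refine ⟨(hAB a (by simp) y (hB1 hy)).1, ?_⟩
      simp; rintro rfl; exact haB (hB1 hy)
    · intro e he
      obtain ⟨y, hy, rfl⟩ := Finset.mem_image.1 he
      rw [hst]
      exact key1 y hy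
    · rw [hst]
      refine hcont.mono (by omega) ?_ le_rfl le_rfl
      rintro e (h | ⟨y, hy, rfl⟩)
      · exact Or.inl h
      · exact Or.inr ⟨y, hB1 hy, rfl⟩

/-! ### The strategies for `K₃`, `K₄`, `K₅` -/

theorem has_of_lt {m : ℕ} {G : Set (Sym2 ℕ)} (f : Fin m → ℕ)
    (h : ∀ u v : Fin m, u < v → f u ≠ f v ∧ s(f u, f v) ∈ G) : Has m G := by
  refine ⟨f, fun u v huv => ?_, fun u v huv => ?_⟩
  · by_contra hne
    rcases lt_or_gt_of_ne hne with h1 | h1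
    · exact (h _ _ h1).1 huv
    · exact (h _ _ h1).1 huv.symm
  · rcases lt_or_gt_of_ne huv with h1 | h1
    · exact (h _ _ h1).2
    · rw [Sym2.eq_swap]; exact (h _ _ h1).2

theorem win3 {p : ℝ} (hp0 : 0 ≤ p) (hp1 : p ≤ 1) (k n : ℕ) :
    Win p 3 (k.choose 2 + n) ∅ ∅
      ((1 - (1 - p) ^ (k.choose 2)) * (1 - 2 ^ k * (1 - p / 2) ^ n)) := by
  have hq : (1 - p) ^ (k.choose 2) ≤ 1 := pow_le_one₀ (by linarith) (by linarith)
  have := Win.collect hp0 hp1 (m := 3) (n0 := k.choose 2) (r1 := 1 - (1 - p) ^ (k.choose 2))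
    (r0 := 0) (by linarith) 0 (Finset.Ioc 0 n) k ∅ ∅ (by simp) (by simp) ?_ (.zero le_rfl)
  · simpa using this
  · intro W hW hc
    have hcard : (W.offDiag.image (fun x => s(x.1, x.2))).card = k.choose 2 := by
      have := Sym2.card_image_offDiag W
      rw [hc] at this
      exact this
    have h2 := Win.find hp0 hp1 (m := 3) (n0 := 0) (G := ∅ ∪ star 0 W) (r1 := 1) (r0 := 0)
      (W.offDiag.image (fun x => s(x.1, x.2))) (∅ ∪ star 0 (Finset.Ioc 0 n)) ?_ ?_ (.zero le_rfl)
    · rw [hcard] at h2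
      simpa using h2
    · intro e he
      simp only [Finset.mem_image, Finset.mem_offDiag, Prod.exists] at he
      obtain ⟨x, y, ⟨hx, hy, hxy⟩, rfl⟩ := he
      refine ⟨?_, by simpa using hxy⟩
      have hx' := Finset.mem_Ioc.1 (hW hx)
      have hy' := Finset.mem_Ioc.1 (hW hy)
      simp only [Set.empty_union, mem_star, not_exists, not_and]
      intro z _ h
      simp at h
      omega
    · intro e he
      simp only [Finset.mem_image, Finset.mem_offDiag, Prod.exists] at he
      obtain ⟨x, y, ⟨hx, hy, hxy⟩, rfl⟩ := he
      have hx' := Finset.mem_Ioc.1 (hW hx)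
      have hy' := Finset.mem_Ioc.1 (hW hy)
      have h1 : s(0, x) ∈ star 0 W := ⟨x, hx, rfl⟩
      have h2 : s(0, y) ∈ star 0 W := ⟨y, hy, rfl⟩
      refine .done (has_of_lt ![0, x, y] ?_) le_rfl
      simp [Fin.forall_fin_succ, h1, h2, hxy]
      omega

/-- The success probability of one triangle search. -/
noncomputable def tau (p : ℝ) (w : ℕ) : ℝ := 1 - (1 - p * (1 - (1 - p) ^ w) ^ 2) ^ w

theorem sig_mem {p : ℝ} (hp0 : 0 ≤ p) (hp1 : p ≤ 1) (w : ℕ) :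
    0 ≤ p * (1 - (1 - p) ^ w) ^ 2 ∧ p * (1 - (1 - p) ^ w) ^ 2 ≤ 1 := by
  have h1 : (1 - p) ^ w ≤ 1 := pow_le_one₀ (by linarith) (by linarith)
  have h2 : 0 ≤ (1 - p) ^ w := pow_nonneg (by linarith) _
  refine ⟨by positivity, ?_⟩
  have : (1 - (1 - p) ^ w) ^ 2 ≤ 1 := pow_le_one₀ (by linarith) (by linarith)
  nlinarith

theorem tau_mem {p : ℝ} (hp0 : 0 ≤ p) (hp1 : p ≤ 1) (w : ℕ) : 0 ≤ tau p w ∧ tau p w ≤ 1 := by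
  obtain ⟨h1, h2⟩ := sig_mem hp0 hp1 w
  have h3 := pow_le_one₀ (n := w) (sub_nonneg.2 h2) (by linarith)
  have h4 := pow_nonneg (sub_nonneg.2 h2) w
  unfold tau
  constructor <;> linarith

/-- Triangle search inside a set `W` of size `5 w`. -/
theorem Win.triangle' {p : ℝ} (hp0 : 0 ≤ p) (hp1 : p ≤ 1) {m n0 : ℕ} {r0 : ℝ} (w : ℕ)
    (Sf S G : Set (Sym2 ℕ)) (hf : Win p m n0 Sf G r0) (W : Finset ℕ) (hW : W.card = 5 * w)
    (hS : S ⊆ Sf) (hfr : ∀ a ∈ W, ∀ b ∈ W, a ≠ b → s(a, b) ∉ S ∧ s(a, b) ∈ Sf)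
    (hT : ∀ a ∈ W, ∀ b ∈ W, ∀ c ∈ W, a ≠ b → a ≠ c → b ≠ c → ∀ G', G ⊆ G' → s(a, b) ∈ G' →
      s(a, c) ∈ G' → s(b, c) ∈ G' → Has m G') :
    Win p m (n0 + w * (2 * w + 1)) S G (1 - (1 - tau p w) * (1 - r0)) := by
  obtain ⟨A, hA, hAc⟩ := Finset.exists_subset_card_eq (s := W) (n := w) (by omega)
  have hd : Disjoint A (W \ A) := Finset.disjoint_sdiff
  have hne : ∀ a ∈ A, ∀ b ∈ W \ A, a ≠ b := by
    rintro a ha b hb rfl; exact (Finset.mem_sdiff.1 hb).2 ha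
  have hB : ∀ b ∈ W \ A, b ∈ W := fun b hb => (Finset.mem_sdiff.1 hb).1
  have := Win.triangle hp0 hp1 w Sf G hf A (W \ A) S hS hd
    (by rw [Finset.card_sdiff_of_subset hA]; omega)
    (fun a ha b hb => hfr a (hA ha) b (hB b hb) (hne a ha b hb))
    (fun a ha b hb => hfr a (hB a ha) b (hB b hb))
    (fun a ha b hb c hc hbc => hT a (hA ha) b (hB b hb) c (hB c hc) (hne a ha b hb) (hne a ha c hc) hbc)
  rw [hAc] at this
  refine this.mono le_rfl le_rfl le_rfl (le_of_eq ?_)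
  unfold tau; ring

theorem win4 {p : ℝ} (hp0 : 0 ≤ p) (hp1 : p ≤ 1) (w n : ℕ) :
    Win p 4 (w * (2 * w + 1) + n) ∅ ∅
      (tau p w * (1 - 2 ^ (5 * w) * (1 - p / 2) ^ n)) := by
  have := Win.collect hp0 hp1 (m := 4) (n0 := w * (2 * w + 1)) (r1 := tau p w)
    (r0 := 0) (tau_mem hp0 hp1 w).1 0 (Finset.Ioc 0 n) (5 * w) ∅ ∅ (by simp) (by simp) ?_ (.zero le_rfl)
  · simpa using this
  · intro W hW hc
    have h2 := Win.triangle' hp0 hp1 (m := 4) (n0 := 0) (r0 := 0) w Set.univ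
      (∅ ∪ star 0 (Finset.Ioc 0 n)) (∅ ∪ star 0 W) (.zero le_rfl) W hc (Set.subset_univ _) ?_ ?_
    · simpa using h2
    · intro x hx y hy hxy
      refine ⟨?_, trivial⟩
      have hx' := Finset.mem_Ioc.1 (hW hx)
      have hy' := Finset.mem_Ioc.1 (hW hy)
      simp only [Set.empty_union, mem_star, not_exists, not_and]
      intro z _ h
      simp at h
      omega
    · intro x hx y hy z hz hxy hxz hyz G' hG h1 h2 h3
      have hx' := Finset.mem_Ioc.1 (hW hx)
      have hy' := Finset.mem_Ioc.1 (hW hy)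
      have hz' := Finset.mem_Ioc.1 (hW hz)
      have h4 : s(0, x) ∈ G' := hG (Or.inr ⟨x, hx, rfl⟩)
      have h5 : s(0, y) ∈ G' := hG (Or.inr ⟨y, hy, rfl⟩)
      have h6 : s(0, z) ∈ G' := hG (Or.inr ⟨z, hz, rfl⟩)
      refine has_of_lt ![0, x, y, z] ?_
      simp [Fin.forall_fin_succ, *]
      omega

/-- Repeated trials inside the neighbourhood `D` of `0`. -/
theorem win5_trials {p : ℝ} (hp0 : 0 ≤ p) (hp1 : p ≤ 1) (w n1 : ℕ)
    (hρ : 0 ≤ 1 - 2 ^ (5 * w) * (1 - p / 2) ^ n1) (T : ℕ) :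
    ∀ (D : Finset ℕ) (S G : Set (Sym2 ℕ)), n1 + T * (5 * w + 1) ≤ D.card → 0 ∉ D →
      (∀ x ∈ D, s(0, x) ∈ G) → (∀ x ∈ D, ∀ y ∈ D, x ≠ y → s(x, y) ∉ S) →
      Win p 5 (T * (n1 + w * (2 * w + 1))) S G
        (1 - (1 - (1 - 2 ^ (5 * w) * (1 - p / 2) ^ n1) * tau p w) ^ T) := by
  obtain ⟨ht0, ht1⟩ := tau_mem hp0 hp1 w
  set ρ : ℝ := 1 - 2 ^ (5 * w) * (1 - p / 2) ^ n1 with hρd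
  have hρ1 : ρ ≤ 1 := by
    have : 0 ≤ (1 - p / 2) ^ n1 := pow_nonneg (by linarith) _
    rw [hρd]
    have : 0 ≤ 2 ^ (5 * w) * (1 - p / 2) ^ n1 := by positivity
    linarith
  induction T with
  | zero => intro D S G _ _ _ _; exact .zero (by simp)
  | succ T ih =>
    intro D S G hD h0 hG hfr
    set V : ℝ := 1 - (1 - ρ * tau p w) ^ T with hV
    have hV1 : V ≤ 1 := by
      have : 0 ≤ 1 - ρ * tau p w := by nlinarith
      have := pow_nonneg this T
      linarith
    rw [add_mul, one_mul] at hD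
    obtain ⟨u, hu⟩ : D.Nonempty := by
      rw [← Finset.card_pos]; omega
    obtain ⟨A, hA, hAc⟩ := Finset.exists_subset_card_eq (s := D.erase u) (n := n1)
      (by rw [Finset.card_erase_of_mem hu]; omega)
    have hAD : A ⊆ D := hA.trans (Finset.erase_subset _ _)
    have huA : u ∉ A := fun h => by simpa using hA h
    have hu0 : u ≠ 0 := by rintro rfl; exact h0 hu
    have hr : V ≤ 1 - (1 - tau p w) * (1 - V) := by nlinarith
    -- continuation after a failed trial
    have hcont : ∀ W ⊆ A, W.card ≤ 5 * w → Win p 5 (T * (n1 + w * (2 * w + 1)))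
        (S ∪ star u A ∪ {e | ∃ a ∈ W, ∃ b ∈ W, e = s(a, b)}) G V := by
      intro W hW hc
      have hWD : W ⊆ D.erase u := hW.trans hA
      refine ih (D.erase u \ W) _ G ?_ ?_ ?_ ?_
      · rw [Finset.card_sdiff_of_subset hWD, Finset.card_erase_of_mem hu]; omega
      · simp [h0]
      · intro x hx; simp at hx; exact hG x hx.1.2
      · intro x hx y hy hxy
        simp at hx hy
        rintro ((h | ⟨z, hz, h⟩) | ⟨a, ha, b, hb, h⟩)
        · exact hfr x hx.1.2 y hy.1.2 hxy h
        · simp at h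
          rcases h with ⟨h, -⟩ | ⟨-, h⟩
          · exact hx.1.1 h
          · exact hy.1.1 h
        · simp at h
          rcases h with ⟨h, -⟩ | ⟨h, -⟩
          · exact hx.2 (h ▸ ha)
          · exact hx.2 (h ▸ hb)
    have := Win.collect hp0 hp1 (m := 5)
      (n0 := T * (n1 + w * (2 * w + 1)) + w * (2 * w + 1)) hr u A (5 * w) S G huA ?_ ?_ ?_
    · rw [hAc, ← hρd] at this
      refine this.mono (le_of_eq (by ring)) le_rfl le_rfl (le_of_eq ?_)
      rw [hV]; ring
    · intro x hx
      exact hfr u hu x (hAD hx) (by rintro rfl; exact huA hx)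
    · intro W hW hc
      refine Win.triangle' hp0 hp1 w (S ∪ star u A ∪ {e | ∃ a ∈ W, ∃ b ∈ W, e = s(a, b)})
        _ _ ((hcont W hW hc.le).mono le_rfl le_rfl Set.subset_union_left le_rfl) W hc
        Set.subset_union_left ?_ ?_
      · intro x hx y hy hxy
        refine ⟨?_, Or.inr ⟨x, hx, y, hy, rfl⟩⟩
        rintro (h | ⟨z, hz, h⟩)
        · exact hfr x (hAD (hW hx)) y (hAD (hW hy)) hxy h
        · simp at h
          rcases h with ⟨rfl, -⟩ | ⟨-, rfl⟩
          · exact huA (hW hx)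
          · exact huA (hW hy)
      · intro x hx y hy z hz hxy hxz hyz G' hG' h1 h2 h3
        have hm : ∀ t ∈ W, s(0, t) ∈ G' ∧ s(u, t) ∈ G' ∧ 0 ≠ t ∧ u ≠ t := by
          intro t ht
          refine ⟨hG' (Or.inl (hG t (hAD (hW ht)))), hG' (Or.inr ⟨t, ht, rfl⟩), ?_, ?_⟩
          · rintro rfl; exact h0 (hAD (hW ht))
          · rintro rfl; exact huA (hW ht)
        have h4 : s(0, u) ∈ G' := hG' (Or.inl (hG u hu))
        obtain ⟨a1, a2, a3, a4⟩ := hm x hx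
        obtain ⟨b1, b2, b3, b4⟩ := hm y hy
        obtain ⟨c1, c2, c3, c4⟩ := hm z hz
        refine has_of_lt ![0, u, x, y, z] ?_
        simp [Fin.forall_fin_succ, *, hu0.symm]
    · exact (hcont ∅ (by simp) (by simp)).mono (by omega) Set.subset_union_left le_rfl le_rfl

theorem win5 {p : ℝ} (hp0 : 0 ≤ p) (hp1 : p ≤ 1) (w n1 T n : ℕ)
    (hρ : 0 ≤ 1 - 2 ^ (5 * w) * (1 - p / 2) ^ n1) :
    Win p 5 (T * (n1 + w * (2 * w + 1)) + n) ∅ ∅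
      ((1 - (1 - (1 - 2 ^ (5 * w) * (1 - p / 2) ^ n1) * tau p w) ^ T) *
        (1 - 2 ^ (n1 + T * (5 * w + 1)) * (1 - p / 2) ^ n)) := by
  obtain ⟨ht0, ht1⟩ := tau_mem hp0 hp1 w
  have hρ1 : 1 - 2 ^ (5 * w) * (1 - p / 2) ^ n1 ≤ 1 := by
    have : 0 ≤ (1 - p / 2) ^ n1 := pow_nonneg (by linarith) _
    have : 0 ≤ 2 ^ (5 * w) * (1 - p / 2) ^ n1 := by positivity
    linarith
  have h01 : (1 - (1 - 2 ^ (5 * w) * (1 - p / 2) ^ n1) * tau p w) ^ T ≤ 1 :=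
    pow_le_one₀ (by nlinarith) (by nlinarith)
  have := Win.collect hp0 hp1 (m := 5) (n0 := T * (n1 + w * (2 * w + 1)))
    (r1 := 1 - (1 - (1 - 2 ^ (5 * w) * (1 - p / 2) ^ n1) * tau p w) ^ T)
    (r0 := 0) (by linarith) 0 (Finset.Ioc 0 n) (n1 + T * (5 * w + 1)) ∅ ∅ (by simp) (by simp) ?_
    (.zero le_rfl)
  · simpa using this
  · intro W hW hc
    refine win5_trials hp0 hp1 w n1 hρ T W _ _ hc.ge ?_ ?_ ?_
    · intro h; have := Finset.mem_Ioc.1 (hW h); omega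
    · intro x hx; exact Or.inr ⟨x, hx, rfl⟩
    · intro x hx y hy hxy
      have hx' := Finset.mem_Ioc.1 (hW hx)
      have hy' := Finset.mem_Ioc.1 (hW hy)
      simp only [Set.empty_union, mem_star, not_exists, not_and]
      intro z _ h
      simp at h
      omega

/-! ### Numerical estimates for the upper bounds -/

theorem bern {a : ℝ} (h0 : 0 ≤ a) (h1 : a ≤ 1) (T : ℕ) : (1 - a) ^ T * (1 + T * a) ≤ 1 := by
  have h2 : 1 + T * a ≤ (1 + a) ^ T := one_add_mul_le_pow (by linarith) T
  have h3 : 0 ≤ (1 - a) ^ T := pow_nonneg (by linarith) _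
  calc (1 - a) ^ T * (1 + T * a) ≤ (1 - a) ^ T * (1 + a) ^ T := by gcongr
    _ = (1 - a ^ 2) ^ T := by rw [← mul_pow]; ring
    _ ≤ 1 := pow_le_one₀ (by nlinarith) (by nlinarith)

/-- Lower bound on `1 - (1-a)^T` from a lower bound `z` on `T a`. -/
theorem bern' {a z : ℝ} (h0 : 0 ≤ a) (h1 : a ≤ 1) (T : ℕ) (hz0 : 0 ≤ z) (hz : z ≤ T * a) :
    z / (1 + z) ≤ 1 - (1 - a) ^ T := by
  have h2 := bern h0 h1 T
  have h3 : 0 ≤ (1 - a) ^ T := pow_nonneg (by linarith) _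
  rw [div_le_iff₀ (by linarith)]
  nlinarith

theorem rho_bound {p : ℝ} (hp0 : 0 < p) (k n : ℕ) (hn : 2 * (k : ℝ) + 6 ≤ p * n) (hp1 : p ≤ 1) :
    7 / 8 ≤ 1 - 2 ^ k * (1 - p / 2) ^ n := by
  have he : (2 : ℝ) ≤ Real.exp 1 := by
    have := Real.add_one_le_exp (1 : ℝ); linarith
  have h1 : (1 - p / 2) ^ n ≤ Real.exp (-(p * n / 2)) := by
    have h := Real.add_one_le_exp (-(p / 2))
    calc (1 - p / 2) ^ n ≤ Real.exp (-(p / 2)) ^ n :=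
          pow_le_pow_left₀ (by linarith) (by linarith) _
      _ = Real.exp (-(p * n / 2)) := by rw [← Real.exp_nat_mul]; congr 1; ring
  have h2 : (2 : ℝ) ^ (k + 3) ≤ Real.exp (p * n / 2) := by
    calc (2 : ℝ) ^ (k + 3) ≤ Real.exp 1 ^ (k + 3) := by gcongr
      _ = Real.exp ((k + 3 : ℕ) : ℝ) := by rw [← Real.exp_nat_mul]; simp
      _ ≤ Real.exp (p * n / 2) := Real.exp_le_exp.2 (by push_cast; linarith)
  have h3 : (2 : ℝ) ^ (k + 3) * (1 - p / 2) ^ n ≤ 1 := by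
    calc (2 : ℝ) ^ (k + 3) * (1 - p / 2) ^ n ≤ Real.exp (p * n / 2) * Real.exp (-(p * n / 2)) := by
          have : 0 ≤ (1 - p / 2) ^ n := pow_nonneg (by linarith) _
          gcongr
      _ = 1 := by rw [← Real.exp_add]; simp
  rw [pow_add] at h3
  nlinarith

theorem ceil_spec {y : ℝ} (hy : 0 ≤ y) : ∃ n : ℕ, y ≤ n ∧ (n : ℝ) ≤ y + 1 :=
  ⟨⌈y⌉₊, Nat.le_ceil y, (Nat.ceil_lt_add_one hy).le⟩

theorem up3 {p x : ℝ} (hx : 1 ≤ x) (hp0 : 0 < p) (hp1 : p ≤ 1) (hpx : p * x ^ 2 = 1) :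
    ∃ N : ℕ, (N : ℝ) ≤ 40000 * x ^ 3 ∧ Win p 3 N ∅ ∅ (1 / 2) := by
  obtain ⟨k, hk1, hk2⟩ := ceil_spec (y := 4 * x) (by linarith)
  obtain ⟨n, hn1, hn2⟩ := ceil_spec (y := (2 * k + 6) * x ^ 2) (by positivity)
  have hc : ((k.choose 2 : ℕ) : ℝ) = k * (k - 1) / 2 := Nat.cast_choose_two ℝ k
  have hx2 : x ≤ x ^ 2 := by nlinarith
  have hx3 : x ^ 2 ≤ x ^ 3 := pow_le_pow_right₀ hx (by norm_num)
  refine ⟨_, ?_, (win3 hp0.le hp1 k n).mono le_rfl le_rfl le_rfl ?_⟩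
  · push_cast
    rw [hc]
    have h1 : (2 * (k : ℝ) + 6) * x ^ 2 ≤ (16 * x) * x ^ 2 := by gcongr; linarith
    have h2 : (k : ℝ) * (k - 1) ≤ (5 * x) * (5 * x) := by
      apply mul_le_mul <;> linarith
    nlinarith
  · have h1 : 7 / 8 ≤ 1 - 2 ^ k * (1 - p / 2) ^ n := by
      refine rho_bound hp0 k n ?_ hp1
      calc 2 * (k : ℝ) + 6 = p * ((2 * k + 6) * x ^ 2) := by linear_combination -(2 * (k : ℝ) + 6) * hpx
        _ ≤ p * n := by gcongr
    have h2 : (6 : ℝ) / (1 + 6) ≤ 1 - (1 - p) ^ (k.choose 2) := by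
      refine bern' hp0.le hp1 _ (by norm_num) ?_
      rw [hc]
      have : (4 * x) * (3 * x) ≤ (k : ℝ) * (k - 1) := by apply mul_le_mul <;> linarith
      calc (6 : ℝ) = (4 * x) * (3 * x) / 2 * p := by linear_combination -6 * hpx
        _ ≤ _ := by gcongr
    nlinarith

theorem up4 {p x : ℝ} (hx : 1 ≤ x) (hp0 : 0 < p) (hp1 : p ≤ 1) (hpx : p * x = 1) :
    ∃ N : ℕ, (N : ℝ) ≤ 40000 * x ^ 2 ∧ Win p 4 N ∅ ∅ (1 / 2) := by
  obtain ⟨w, hk1, hk2⟩ := ceil_spec (y := 4 * x) (by linarith)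
  obtain ⟨n, hn1, hn2⟩ := ceil_spec (y := (10 * w + 6) * x) (by positivity)
  have hx2 : x ≤ x ^ 2 := by nlinarith
  refine ⟨_, ?_, (win4 hp0.le hp1 w n).mono le_rfl le_rfl le_rfl ?_⟩
  · push_cast
    have h1 : (10 * (w : ℝ) + 6) * x ≤ (56 * x) * x := by gcongr; linarith
    have h2 : (w : ℝ) * (2 * w + 1) ≤ (5 * x) * (11 * x) := by
      apply mul_le_mul <;> first | linarith | positivity
    nlinarith
  · have h1 : 7 / 8 ≤ 1 - 2 ^ (5 * w) * (1 - p / 2) ^ n := by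
      refine rho_bound hp0 (5 * w) n ?_ hp1
      calc 2 * ((5 * w : ℕ) : ℝ) + 6 = p * ((10 * w + 6) * x) := by
            push_cast; linear_combination -(10 * (w : ℝ) + 6) * hpx
        _ ≤ p * n := by gcongr
    have hwp : 4 ≤ (w : ℝ) * p := by
      calc (4 : ℝ) = (4 * x) * p := by linear_combination -4 * hpx
        _ ≤ _ := by gcongr
    have h2 : (4 : ℝ) / (1 + 4) ≤ 1 - (1 - p) ^ w :=
      bern' hp0.le hp1 _ (by norm_num) hwp
    obtain ⟨hs0, hs1⟩ := sig_mem hp0.le hp1 w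
    have h3 : (2 : ℝ) / (1 + 2) ≤ tau p w := by
      refine bern' hs0 hs1 _ (by norm_num) ?_
      have : ((4 : ℝ) / (1 + 4)) ^ 2 ≤ (1 - (1 - p) ^ w) ^ 2 := by gcongr
      rw [← mul_assoc]
      calc (2 : ℝ) ≤ 4 * ((4 : ℝ) / (1 + 4)) ^ 2 := by norm_num
        _ ≤ _ := by gcongr
    nlinarith

theorem up5 {p x : ℝ} (hx : 1 ≤ x) (hp0 : 0 < p) (hp1 : p ≤ 1) (hpx : p * x ^ 3 = 1) :
    ∃ N : ℕ, (N : ℝ) ≤ 40000 * x ^ 8 ∧ Win p 5 N ∅ ∅ (1 / 2) := by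
  have hx0 : 0 < x := by linarith
  obtain ⟨w, hw1, hw2⟩ := ceil_spec (y := x ^ 2) (by positivity)
  obtain ⟨n1, hn1, hn2⟩ := ceil_spec (y := (10 * w + 6) * x ^ 3) (by positivity)
  obtain ⟨T, hT1, hT2⟩ := ceil_spec (y := 540 * x ^ 3) (by positivity)
  obtain ⟨n, hm1, hm2⟩ := ceil_spec (y := (2 * ((n1 + T * (5 * w + 1) : ℕ) : ℝ) + 6) * x ^ 3)
    (by positivity)
  have e2 : 1 ≤ x ^ 2 := one_le_pow₀ hx
  have e3 : 1 ≤ x ^ 3 := one_le_pow₀ hx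
  have e4 : 1 ≤ x ^ 4 := one_le_pow₀ hx
  have e5 : 1 ≤ x ^ 5 := one_le_pow₀ hx
  have e8 : 1 ≤ x ^ 8 := one_le_pow₀ hx
  have e45 : x ^ 4 ≤ x ^ 5 := pow_le_pow_right₀ hx (by norm_num)
  have bw : (w : ℝ) ≤ 2 * x ^ 2 := by linarith
  have bn1 : (n1 : ℝ) ≤ 27 * x ^ 5 := by
    calc (n1 : ℝ) ≤ (10 * w + 6) * x ^ 3 + 1 := hn2
      _ ≤ (26 * x ^ 2) * x ^ 3 + x ^ 5 := by gcongr; linarith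
      _ = 27 * x ^ 5 := by ring
  have bT : (T : ℝ) ≤ 541 * x ^ 3 := by linarith
  have bk : ((n1 + T * (5 * w + 1) : ℕ) : ℝ) ≤ 5978 * x ^ 5 := by
    push_cast
    calc (n1 : ℝ) + T * (5 * w + 1) ≤ 27 * x ^ 5 + 541 * x ^ 3 * (11 * x ^ 2) := by
          gcongr; linarith
      _ = 5978 * x ^ 5 := by ring
  have bn : (n : ℝ) ≤ 11963 * x ^ 8 := by
    calc (n : ℝ) ≤ _ := hm2
      _ ≤ (11962 * x ^ 5) * x ^ 3 + x ^ 8 := by gcongr; linarith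
      _ = _ := by ring
  have hρ : 7 / 8 ≤ 1 - 2 ^ (5 * w) * (1 - p / 2) ^ n1 := by
    refine rho_bound hp0 (5 * w) n1 ?_ hp1
    calc 2 * ((5 * w : ℕ) : ℝ) + 6 = p * ((10 * w + 6) * x ^ 3) := by
          push_cast; linear_combination -(10 * (w : ℝ) + 6) * hpx
      _ ≤ p * n1 := by gcongr
  have hρ' : 7 / 8 ≤ 1 - 2 ^ (n1 + T * (5 * w + 1)) * (1 - p / 2) ^ n := by
    refine rho_bound hp0 _ n ?_ hp1
    calc 2 * ((n1 + T * (5 * w + 1) : ℕ) : ℝ) + 6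
          = p * ((2 * ((n1 + T * (5 * w + 1) : ℕ) : ℝ) + 6) * x ^ 3) := by
          linear_combination -(2 * ((n1 + T * (5 * w + 1) : ℕ) : ℝ) + 6) * hpx
      _ ≤ p * n := by gcongr
  refine ⟨_, ?_, (win5 hp0.le hp1 w n1 T n (by linarith)).mono le_rfl le_rfl le_rfl ?_⟩
  · push_cast
    have h2 : (w : ℝ) * (2 * w + 1) ≤ (2 * x ^ 2) * (5 * x ^ 2) := by
      apply mul_le_mul <;> first | linarith | positivity
    have h3 : (w : ℝ) * (2 * w + 1) ≤ 10 * x ^ 5 := by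
      have : (2 * x ^ 2) * (5 * x ^ 2) = 10 * x ^ 4 := by ring
      linarith
    have h4 : (n1 : ℝ) + w * (2 * w + 1) ≤ 27 * x ^ 5 + 10 * x ^ 5 := by linarith
    have h5 : (T : ℝ) * (n1 + w * (2 * w + 1)) ≤ 541 * x ^ 3 * (27 * x ^ 5 + 10 * x ^ 5) :=
      mul_le_mul bT h4 (by positivity) (by positivity)
    calc (T : ℝ) * (n1 + w * (2 * w + 1)) + n
        ≤ 541 * x ^ 3 * (27 * x ^ 5 + 10 * x ^ 5) + 11963 * x ^ 8 := by
          linarith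
      _ = 31980 * x ^ 8 := by ring
      _ ≤ 40000 * x ^ 8 := by linarith
  · have hp3 : p = 1 / x ^ 3 := by field_simp; linarith
    have hwp : 1 / x ≤ (w : ℝ) * p := by
      calc 1 / x = x ^ 2 * p := by rw [hp3]; field_simp
        _ ≤ _ := by gcongr
    have h1x : 1 / x ≤ 1 := by rw [div_le_one hx0]; exact hx
    have h2 : 1 / x / (1 + 1 / x) ≤ 1 - (1 - p) ^ w :=
      bern' hp0.le hp1 _ (by positivity) hwp
    have h2' : 1 / (2 * x) ≤ 1 - (1 - p) ^ w := by
      refine le_trans ?_ h2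
      rw [div_div]
      apply one_div_le_one_div_of_le (by positivity)
      have : x * (1 + 1 / x) = x + 1 := by field_simp
      linarith
    obtain ⟨hs0, hs1⟩ := sig_mem hp0.le hp1 w
    have hz : 1 / (4 * x ^ 3) ≤ w * (p * (1 - (1 - p) ^ w) ^ 2) := by
      rw [← mul_assoc]
      calc 1 / (4 * x ^ 3) = 1 / x * (1 / (2 * x)) ^ 2 := by field_simp; norm_num
        _ ≤ _ := by gcongr
    have h3 : 1 / (4 * x ^ 3) / (1 + 1 / (4 * x ^ 3)) ≤ tau p w :=
      bern' hs0 hs1 _ (by positivity) hz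
    have h3' : 1 / (5 * x ^ 3) ≤ tau p w := by
      refine le_trans ?_ h3
      rw [div_div]
      apply one_div_le_one_div_of_le (by positivity)
      have : 4 * x ^ 3 * (1 + 1 / (4 * x ^ 3)) = 4 * x ^ 3 + 1 := by field_simp
      linarith
    obtain ⟨ht0, ht1⟩ := tau_mem hp0.le hp1 w
    set ρ : ℝ := 1 - 2 ^ (5 * w) * (1 - p / 2) ^ n1 with hρd
    have hρ1 : ρ ≤ 1 := by
      have : 0 ≤ (1 - p / 2) ^ n1 := pow_nonneg (by linarith) _
      have : 0 ≤ 2 ^ (5 * w) * (1 - p / 2) ^ n1 := by positivity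
      linarith
    have h4 : (40 : ℝ) / (1 + 40) ≤ 1 - (1 - ρ * tau p w) ^ T := by
      refine bern' (mul_nonneg (by linarith) ht0) (mul_le_one₀ hρ1 ht0 ht1) _ (by norm_num) ?_
      calc (40 : ℝ) ≤ 540 * x ^ 3 * (7 / 8 * (1 / (5 * x ^ 3))) := by field_simp; norm_num
        _ ≤ _ := by gcongr
    calc (1 : ℝ) / 2 ≤ 40 / (1 + 40) * (7 / 8) := by norm_num
      _ ≤ _ := mul_le_mul h4 hρ' (by norm_num) (le_trans (by norm_num) h4)

/-! ### Lower bounds: counting time-ordered patterns -/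

/-- Real-valued indicator of a proposition. -/
noncomputable def ind (P : Prop) : ℝ := if P then 1 else 0

theorem ind_nonneg (P : Prop) : 0 ≤ ind P := by unfold ind; split_ifs <;> norm_num
theorem ind_le_one (P : Prop) : ind P ≤ 1 := by unfold ind; split_ifs <;> norm_num
theorem ind_mono {P P' : Prop} (h : P → P') : ind P ≤ ind P' := by
  by_cases hP : P
  · simp [ind, hP, h hP]
  · simp only [ind, hP, if_false]; split_ifs <;> norm_num
theorem ind_true {P : Prop} (h : P) : ind P = 1 := if_pos h
theorem ind_false {P : Prop} (h : ¬ P) : ind P = 0 := if_neg h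

theorem Ee_nonneg {p : ℝ} (h0 : 0 ≤ p) (h1 : p ≤ 1) (n : ℕ) {F : List Bool → ℝ}
    (h : ∀ l, 0 ≤ F l) : 0 ≤ Ee p n F :=
  (Ee_const p 0 n).symm.le.trans (Ee_mono h0 h1 n fun l _ => h l)

theorem Ee_mem_le {p : ℝ} (h0 : 0 ≤ p) (h1 : p ≤ 1) (e : Sym2 ℕ) (n : ℕ) :
    ∀ Q : List Bool → Sym2 ℕ, ValidBuilder Q → Ee p n (fun h => ind (e ∈ succL Q h)) ≤ p := by
  have h2 : 0 ≤ 1 - p := by linarith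
  induction n with
  | zero => intro Q hQ; simpa [Ee, succL, ind] using h0
  | succ n ih =>
    intro Q hQ
    simp only [Ee]
    by_cases he : Q [] = e
    · have hf : Ee p n (fun h => ind (e ∈ succL Q (false :: h))) ≤ 0 := by
        refine le_trans (Ee_mono h0 h1 n (G := fun _ => 0) fun h _ => ?_) (Ee_const p 0 n).le
        rw [ind_false]
        simp only [succL, Bool.false_eq_true, if_false]
        rw [mem_succL]
        rintro ⟨t, -, h3, -⟩
        exact hQ.head_ne _ _ (he.trans h3.symm)
      have ht : Ee p n (fun h => ind (e ∈ succL Q (true :: h))) ≤ 1 :=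
        le_trans (Ee_mono h0 h1 n (G := fun _ => 1) fun h _ => ind_le_one _) (Ee_const p 1 n).le
      nlinarith
    · have hf : Ee p n (fun h => ind (e ∈ succL Q (false :: h))) ≤ p := by
        simpa [succL] using ih _ (hQ.shift false)
      have ht : Ee p n (fun h => ind (e ∈ succL Q (true :: h))) ≤ p := by
        have := ih _ (hQ.shift true)
        simpa [succL, Ne.symm he] using this
      nlinarith

theorem Ee_sublist_le {p : ℝ} (h0 : 0 ≤ p) (h1 : p ≤ 1) (e : Sym2 ℕ) (n : ℕ) :
    ∀ (Q : List Bool → Sym2 ℕ), ValidBuilder Q → ∀ (E : List (Sym2 ℕ)) (M : ℕ),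
      Ee p n (fun h => ind ((E ++ [e]).Sublist ((succL Q h).take M))) ≤
        p * Ee p n (fun h => ind (E.Sublist ((succL Q h).take M))) := by
  have h2 : 0 ≤ 1 - p := by linarith
  induction n with
  | zero =>
    intro Q hQ E M
    simp only [Ee, succL]
    rw [ind_false (by simp)]
    exact mul_nonneg h0 (ind_nonneg _)
  | succ n ih =>
    intro Q hQ E M
    cases E with
    | nil =>
      have e1 : Ee p (n + 1) (fun h => ind (([] : List (Sym2 ℕ)).Sublist ((succL Q h).take M))) = 1 := by
        rw [← Ee_const p 1 (n + 1)]
        congr 1; ext h; exact ind_true (List.nil_sublist _)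
      rw [e1, mul_one]
      refine le_trans (Ee_mono h0 h1 _ fun h _ => ind_mono fun hs => ?_) (Ee_mem_le h0 h1 e _ Q hQ)
      exact List.mem_of_mem_take (hs.subset (by simp))
    | cons e1 E =>
      cases M with
      | zero =>
        refine le_trans (Ee_mono h0 h1 _ (G := fun _ => 0) fun h _ => ?_)
          ((Ee_const p 0 _).le.trans (mul_nonneg h0 (Ee_nonneg h0 h1 _ fun _ => ind_nonneg _)))
        rw [ind_false (by simp)]
      | succ M =>
        have hf := ih _ (hQ.shift false) (e1 :: E) (M + 1)
        simp only [Ee, mul_add]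
        have ht : Ee p n (fun h => ind ((e1 :: E ++ [e]).Sublist ((succL Q (true :: h)).take (M + 1))))
            ≤ p * Ee p n (fun h => ind ((e1 :: E).Sublist ((succL Q (true :: h)).take (M + 1)))) := by
          simp only [succL, if_true, List.take_succ_cons, List.cons_append]
          by_cases he : Q [] = e1
          · simp only [he, List.cons_sublist_cons]
            exact ih _ (hQ.shift true) E M
          · have hne : ∀ X S : List (Sym2 ℕ), (e1 :: X).Sublist (Q [] :: S) ↔ (e1 :: X).Sublist S := by
              intro X S
              rw [List.sublist_cons_iff]
              constructor
              · rintro (h | ⟨r, h, -⟩)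
                · exact h
                · simp at h; exact absurd h.1.symm he
              · exact Or.inl
            simp only [hne]
            exact ih _ (hQ.shift true) (e1 :: E) M
        have hf' : Ee p n (fun h => ind ((e1 :: E ++ [e]).Sublist ((succL Q (false :: h)).take (M + 1))))
            ≤ p * Ee p n (fun h => ind ((e1 :: E).Sublist ((succL Q (false :: h)).take (M + 1)))) := by
          simpa [succL] using hf
        nlinarith [mul_le_mul_of_nonneg_left ht h0, mul_le_mul_of_nonneg_left hf' h2]

theorem Ee_length (p : ℝ) (n : ℕ) : ∀ Q : List Bool → Sym2 ℕ,
    Ee p n (fun h => ((succL Q h).length : ℝ)) = p * n := by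
  induction n with
  | zero => intro Q; simp [Ee, succL]
  | succ n ih =>
    intro Q
    simp only [Ee, succL, if_true, Bool.false_eq_true, if_false, List.length_cons, Nat.cast_add,
      Nat.cast_one, Ee_add, Ee_const, ih]
    ring

/-- vertices covered by a list of edges -/
noncomputable def vset {m : ℕ} (L : List (Sym2 (Fin m))) : Finset (Fin m) :=
  Finset.univ.filter fun v => ∃ e ∈ L, v ∈ e

theorem mem_vset {m : ℕ} {L : List (Sym2 (Fin m))} {v : Fin m} :
    v ∈ vset L ↔ ∃ e ∈ L, v ∈ e := by simp [vset]

theorem mem_vset_append {m : ℕ} {L : List (Sym2 (Fin m))} {e : Sym2 (Fin m)} {v : Fin m} :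
    v ∈ vset (L ++ [e]) ↔ v ∈ vset L ∨ v ∈ e := by
  simp [mem_vset, or_and_right, exists_or]

/-- `Pat L a b`: the list of edges `L` has `a` opening edges and `b` closing edges. -/
inductive Pat {m : ℕ} : List (Sym2 (Fin m)) → ℕ → ℕ → Prop
  | nil : Pat [] 0 0
  | close {L : List (Sym2 (Fin m))} {a b : ℕ} (e : Sym2 (Fin m)) : Pat L a b →
      (∀ v ∈ e, v ∈ vset L) → Pat (L ++ [e]) a (b + 1)
  | opn {L : List (Sym2 (Fin m))} {a b : ℕ} (e : Sym2 (Fin m)) : Pat L a b →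
      Pat (L ++ [e]) (a + 1) b

/-- maps supported on the vertices of `L` with values below `B` -/
noncomputable def maps {m : ℕ} (B : ℕ) (L : List (Sym2 (Fin m))) : Finset (Fin m → ℕ) :=
  (Fintype.piFinset fun _ => Finset.range B).filter fun f => ∀ v, v ∉ vset L → f v = 0

/-- number of ordered realizations of `L` in `S` -/
noncomputable def cnt {m : ℕ} (B : ℕ) (L : List (Sym2 (Fin m))) (S : List (Sym2 ℕ)) : ℝ :=
  ∑ f ∈ maps B L, ind ((L.map (Sym2.map f)).Sublist S)

theorem cnt_eq {m : ℕ} (B : ℕ) (L : List (Sym2 (Fin m))) (S : List (Sym2 ℕ)) :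
    cnt B L S = (((maps B L).filter fun f => (L.map (Sym2.map f)).Sublist S).card : ℝ) := by
  unfold cnt ind
  rw [Finset.card_filter]
  push_cast
  refine Finset.sum_congr rfl fun f _ => ?_
  congr

theorem card_pairs (S : List (Sym2 ℕ)) (B : ℕ) :
    (((Finset.range B ×ˢ Finset.range B).filter fun x => s(x.1, x.2) ∈ S).card) ≤ 2 * S.length := by
  have hsub : ((Finset.range B ×ˢ Finset.range B).filter fun x => s(x.1, x.2) ∈ S) ⊆
      S.toFinset.biUnion fun e => {(e.out.1, e.out.2), (e.out.2, e.out.1)} := by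
    rintro ⟨x, y⟩ hx
    simp only [Finset.mem_filter] at hx
    simp only [Finset.mem_biUnion, List.mem_toFinset, Finset.mem_insert, Finset.mem_singleton]
    refine ⟨_, hx.2, ?_⟩
    have : s((s(x, y) : Sym2 ℕ).out.1, (s(x, y) : Sym2 ℕ).out.2) = s(x, y) := Quot.out_eq _
    rw [Sym2.eq_iff] at this
    simp only [Prod.mk.injEq]
    omega
  refine (Finset.card_le_card hsub).trans ?_
  refine (Finset.card_biUnion_le_card_mul _ _ 2 fun e _ => Finset.card_le_two).trans ?_
  have := List.toFinset_card_le S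
  omega

theorem cnt_open {m : ℕ} {B : ℕ} (hB : 0 < B) (L : List (Sym2 (Fin m))) (e : Sym2 (Fin m))
    (S : List (Sym2 ℕ)) (M : ℕ) (hS : S.length ≤ M) :
    cnt B (L ++ [e]) S ≤ (2 * M) * cnt B L S := by
  induction e using Sym2.ind with
  | _ u v =>
  rw [cnt_eq, cnt_eq]
  have hle := card_pairs S B
  set X := (Finset.range B ×ˢ Finset.range B).filter fun x => s(x.1, x.2) ∈ S
  set Y := (maps B L).filter fun f => (L.map (Sym2.map f)).Sublist S
  have key : ((maps B (L ++ [s(u, v)])).filter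
      fun f => ((L ++ [s(u, v)]).map (Sym2.map f)).Sublist S).card ≤ (X ×ˢ Y).card := by
    refine Finset.card_le_card_of_injOn
      (fun f => ((f u, f v), fun w => if w ∈ vset L then f w else 0)) ?_ ?_
    · intro f hf
      simp only [Finset.coe_filter, Set.mem_ofPred_eq, maps, Finset.mem_filter,
        Fintype.mem_piFinset, Finset.mem_range] at hf
      obtain ⟨⟨hf1, hf2⟩, hf3⟩ := hf
      rw [List.map_append] at hf3
      simp only [Finset.mem_coe, Finset.mem_product]
      refine ⟨?_, ?_⟩
      · simp only [X, Finset.mem_filter, Finset.mem_product, Finset.mem_range]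
        exact ⟨⟨hf1 u, hf1 v⟩, hf3.subset (by simp)⟩
      · simp only [Y, maps, Finset.mem_filter, Fintype.mem_piFinset, Finset.mem_range]
        refine ⟨⟨fun w => ?_, fun w hw => by simp [hw]⟩, ?_⟩
        · split_ifs
          · exact hf1 w
          · exact hB
        · have : L.map (Sym2.map fun w => if w ∈ vset L then f w else 0) = L.map (Sym2.map f) := by
            refine List.map_congr_left fun e he => Sym2.map_congr fun w hw => ?_
            rw [if_pos (mem_vset.2 ⟨e, he, hw⟩)]
          rw [this]
          exact (List.sublist_append_left _ _).trans hf3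
    · intro f hf g hg hfg
      simp only [Finset.coe_filter, Set.mem_ofPred_eq, maps, Finset.mem_filter] at hf hg
      simp only [Prod.mk.injEq] at hfg
      obtain ⟨⟨h1, h2⟩, h3⟩ := hfg
      ext w
      by_cases hw : w ∈ vset L
      · have := congrFun h3 w
        simpa [hw] using this
      · by_cases hw2 : w ∈ s(u, v)
        · rcases Sym2.mem_iff.1 hw2 with rfl | rfl
          · exact h1
          · exact h2
        · have hn : w ∉ vset (L ++ [s(u, v)]) := by rw [mem_vset_append]; tauto
          rw [hf.1.2 w hn, hg.1.2 w hn]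
  rw [Finset.card_product] at key
  have h2 : X.card * Y.card ≤ (2 * M) * Y.card := Nat.mul_le_mul_right _ (hle.trans (by omega))
  exact_mod_cast key.trans h2

theorem maps_close {m : ℕ} (B : ℕ) (L : List (Sym2 (Fin m))) (e : Sym2 (Fin m))
    (h : ∀ v ∈ e, v ∈ vset L) : maps B (L ++ [e]) = maps B L := by
  have : vset (L ++ [e]) = vset L := by
    ext v; rw [mem_vset_append]; constructor
    · rintro (h1 | h1)
      · exact h1
      · exact h v h1
    · exact Or.inl
  unfold maps; rw [this]

theorem Ee_cnt_le {p : ℝ} (h0 : 0 ≤ p) (h1 : p ≤ 1) {m : ℕ} {B : ℕ} (hB : 0 < B) (M n : ℕ)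
    (Q : List Bool → Sym2 ℕ) (hQ : ValidBuilder Q) {L : List (Sym2 (Fin m))} {a b : ℕ}
    (hL : Pat L a b) :
    Ee p n (fun h => cnt B L ((succL Q h).take M)) ≤ (2 * M) ^ a * p ^ b := by
  induction hL with
  | nil =>
    simp only [pow_zero, mul_one]
    refine le_trans (Ee_mono h0 h1 n (G := fun _ => 1) fun h _ => ?_) (Ee_const p 1 n).le
    rw [cnt_eq]
    have : (((maps B ([] : List (Sym2 (Fin m)))).filter
      fun f => (([] : List (Sym2 (Fin m))).map (Sym2.map f)).Sublist ((succL Q h).take M)).card) ≤ 1 := by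
      rw [Finset.card_le_one]
      intro f hf g hg
      simp only [maps, Finset.mem_filter] at hf hg
      ext w
      have hw : w ∉ vset ([] : List (Sym2 (Fin m))) := by simp [mem_vset]
      rw [hf.1.2 w hw, hg.1.2 w hw]
    exact_mod_cast this
  | @close L a b e hP he ih =>
    have : Ee p n (fun h => cnt B (L ++ [e]) ((succL Q h).take M)) ≤
        p * Ee p n (fun h => cnt B L ((succL Q h).take M)) := by
      unfold cnt
      rw [maps_close B L e he, Ee_sum, Ee_sum, Finset.mul_sum]
      refine Finset.sum_le_sum fun f _ => ?_
      have := Ee_sublist_le h0 h1 (Sym2.map f e) n Q hQ (L.map (Sym2.map f)) M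
      simpa using this
    calc _ ≤ _ := this
      _ ≤ p * ((2 * M) ^ a * p ^ b) := by gcongr
      _ = _ := by ring
  | @opn L a b e hP ih =>
    calc _ ≤ Ee p n (fun h => (2 * M) * cnt B L ((succL Q h).take M)) :=
          Ee_mono h0 h1 n fun h _ => cnt_open hB L e _ M (List.length_take_le _ _)
      _ = (2 * M) * Ee p n (fun h => cnt B L ((succL Q h).take M)) := Ee_mul _ _ _ _
      _ ≤ (2 * M) * ((2 * M) ^ a * p ^ b) := by gcongr
      _ = _ := by ring

/-! ### Combinatorics of orderings -/

theorem Pat.ext {m : ℕ} (k : ℕ) (post : List (Sym2 (Fin m))) :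
    ∀ {L : List (Sym2 (Fin m))} {a b : ℕ}, Pat L a b → a + k ≤ (vset L).card →
    ∃ a' b', Pat (L ++ post) a' b' ∧ a' + k ≤ (vset (L ++ post)).card ∧
      a' + b' = a + b + post.length := by
  induction post with
  | nil => intro L a b h hk; exact ⟨a, b, by simpa using h, by simpa using hk, by simp⟩
  | cons e post ih =>
    intro L a b h hk
    have hsub : vset L ⊆ vset (L ++ [e]) := fun v hv => mem_vset_append.2 (Or.inl hv)
    have e1 : L ++ e :: post = (L ++ [e]) ++ post := by simp
    rw [e1]
    by_cases hc : ∀ v ∈ e, v ∈ vset L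
    · obtain ⟨a', b', h1, h2, h3⟩ := ih (Pat.close e h hc) (hk.trans (Finset.card_le_card hsub))
      exact ⟨a', b', h1, h2, by simp only [List.length_cons]; omega⟩
    · push Not at hc
      obtain ⟨v, hv, hv2⟩ := hc
      have hlt : (vset L).card < (vset (L ++ [e])).card :=
        Finset.card_lt_card ⟨hsub, fun hh => hv2 (hh (mem_vset_append.2 (Or.inr hv)))⟩
      obtain ⟨a', b', h1, h2, h3⟩ := ih (Pat.opn e h) (by omega)
      exact ⟨a', b', h1, h2, by simp only [List.length_cons]; omega⟩

theorem Pat.one {m : ℕ} {e : Sym2 (Fin m)} (he : ¬ e.IsDiag) (post : List (Sym2 (Fin m))) :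
    ∃ a b, Pat (e :: post) a b ∧ a + 1 ≤ (vset (e :: post)).card ∧ a + b = (e :: post).length := by
  have h2 : 0 + 1 + 1 ≤ (vset ([] ++ [e])).card := by
    induction e using Sym2.ind with
    | _ u v =>
    have huv : u ≠ v := by simpa using he
    have : ({u, v} : Finset (Fin m)) ⊆ vset ([] ++ [s(u, v)]) := by
      intro w hw
      rw [mem_vset_append]
      right
      simpa using hw
    have h5 := Finset.card_le_card this
    rw [Finset.card_pair huv] at h5
    exact h5
  obtain ⟨a, b, h1, h3, h4⟩ := Pat.ext 1 post (Pat.opn e Pat.nil) h2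
  refine ⟨a, b, by simpa using h1, by simpa using h3, ?_⟩
  simp only [List.length_cons]; omega

/-- disjoint edges -/
def Dj {m : ℕ} (x y : Sym2 (Fin m)) : Prop := ∀ v ∈ x, v ∉ y

theorem Dj.symm {m : ℕ} {x y : Sym2 (Fin m)} (h : Dj x y) : Dj y x := fun v hv hx => h v hx hv

theorem Dj.irrefl {m : ℕ} (x : Sym2 (Fin m)) : ¬ Dj x x := by
  induction x using Sym2.ind with
  | _ u v => intro h; exact h u (by simp) (by simp)

theorem decomp {m : ℕ} (L : List (Sym2 (Fin m))) :
    (∀ x ∈ L, ∀ y ∈ L, ¬ Dj x y) ∨ ∃ P g post, L = P ++ g :: post ∧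
      (∀ x ∈ P, ∀ y ∈ P, ¬ Dj x y) ∧ ∃ f ∈ P, Dj f g := by
  induction L using List.reverseRecOn with
  | nil => left; simp
  | append_singleton L e ih =>
    rcases ih with ih | ⟨P, g, post, rfl, h1, h2⟩
    · by_cases hf : ∃ f ∈ L, Dj f e
      · exact Or.inr ⟨L, e, [], rfl, ih, hf⟩
      · push Not at hf
        left
        intro x hx y hy hxy
        simp only [List.mem_append, List.mem_singleton] at hx hy
        rcases hx with hx | rfl <;> rcases hy with hy | rfl
        · exact ih x hx y hy hxy
        · exact hf x hx hxy
        · exact hf y hy hxy.symm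
        · exact Dj.irrefl _ hxy
    · exact Or.inr ⟨P, g, post ++ [e], by simp, h1, h2⟩

theorem del_le_two {m : ℕ} (P : List (Sym2 (Fin m))) (hn : P.Nodup)
    (hP : ∀ x ∈ P, ∀ y ∈ P, ¬ Dj x y) {f g : Sym2 (Fin m)} (hf : f ∈ P) (hfg : Dj f g)
    (hfd : ¬ f.IsDiag) (hgd : ¬ g.IsDiag) :
    (P.filter fun x => ¬ Dj x g).length ≤ 2 := by
  induction f using Sym2.ind with
  | _ a b =>
  induction g using Sym2.ind with
  | _ c d =>
  have hab : a ≠ b := by simpa using hfd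
  have hcd : c ≠ d := by simpa using hgd
  have ha := hfg a (by simp)
  have hb := hfg b (by simp)
  simp only [Sym2.mem_iff, not_or] at ha hb
  have hD1 : Dj s(a, c) s(b, d) := by
    intro v hv
    simp only [Sym2.mem_iff, not_or] at hv ⊢
    rcases hv with rfl | rfl
    · exact ⟨hab, ha.2⟩
    · exact ⟨Ne.symm hb.1, hcd⟩
  have hD2 : Dj s(a, d) s(b, c) := by
    intro v hv
    simp only [Sym2.mem_iff, not_or] at hv ⊢
    rcases hv with rfl | rfl
    · exact ⟨hab, ha.1⟩
    · exact ⟨Ne.symm hb.2, Ne.symm hcd⟩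
  have hn2 := hn.filter (fun x => decide (¬ Dj x s(c, d)))
  rw [← List.toFinset_card_of_nodup hn2]
  have hsub : (P.filter fun x => ¬ Dj x s(c, d)).toFinset ⊆
      {if s(a, c) ∈ P then s(a, c) else s(b, d), if s(a, d) ∈ P then s(a, d) else s(b, c)} := by
    intro x hx
    simp only [List.mem_toFinset, List.mem_filter, decide_eq_true_eq] at hx
    obtain ⟨hxP, hxg⟩ := hx
    have hxf := hP x hxP _ hf
    have h4 : x = s(a, c) ∨ x = s(a, d) ∨ x = s(b, c) ∨ x = s(b, d) := by
      unfold Dj at hxg hxf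
      push Not at hxg hxf
      obtain ⟨u, hu, hu2⟩ := hxf
      obtain ⟨v, hv, hv2⟩ := hxg
      have huv : u ≠ v := by
        rintro rfl
        exact hfg u hu2 hv2
      have hx : x = s(u, v) := (Sym2.mem_and_mem_iff huv).1 ⟨hu, hv⟩
      rw [Sym2.mem_iff] at hu2 hv2
      rcases hu2 with rfl | rfl <;> rcases hv2 with rfl | rfl <;> simp [hx]
    simp only [Finset.mem_insert, Finset.mem_singleton]
    rcases h4 with rfl | rfl | rfl | rfl
    · left; rw [if_pos hxP]
    · right; rw [if_pos hxP]
    · right; rw [if_neg fun hh => hP _ hh _ hxP hD2]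
    · left; rw [if_neg fun hh => hP _ hh _ hxP hD1]
  exact (Finset.card_le_card hsub).trans Finset.card_le_two

/-- every ordering of the edges of `K m` contains a cheap pattern -/
def Comb (m a0 b0 : ℕ) : Prop :=
  ∀ L0 : List (Sym2 (Fin m)), L0.Nodup → (∀ e, e ∈ L0 ↔ ¬ e.IsDiag) →
    ∃ L : List (Sym2 (Fin m)), L.Sublist L0 ∧ ∃ a b, Pat L a b ∧ a ≤ a0 ∧ b0 ≤ b

theorem edge_count {m : ℕ} {L0 : List (Sym2 (Fin m))} (hn : L0.Nodup)
    (h : ∀ e, e ∈ L0 ↔ ¬ e.IsDiag) : L0.length = m.choose 2 := by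
  have := Sym2.card_subtype_not_diag (α := Fin m)
  rw [Fintype.card_fin] at this
  rw [← this, ← List.toFinset_card_of_nodup hn, Fintype.card_subtype]
  congr 1
  ext e
  simp [h]

theorem vset_card_le {m : ℕ} (L : List (Sym2 (Fin m))) : (vset L).card ≤ m := by
  simpa using Finset.card_le_univ (vset L)

theorem comb3 : Comb 3 2 1 := by
  intro L0 hn h
  have hl := edge_count hn h
  cases L0 with
  | nil => simp [Nat.choose] at hl
  | cons e post =>
    have he := (h e).1 (by simp)
    obtain ⟨a, b, h1, h2, h3⟩ := Pat.one he post
    have := vset_card_le (e :: post)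
    rw [hl, show Nat.choose 3 2 = 3 from rfl] at h3
    exact ⟨_, List.Sublist.refl _, a, b, h1, by omega, by omega⟩

theorem comb_big {m : ℕ} (hm : 4 ≤ m) : Comb m (m - 2) (m.choose 2 - 2 - (m - 2)) := by
  intro L0 hn h
  have hl := edge_count hn h
  rcases decomp L0 with hd | ⟨P, g, post, rfl, hP, f, hf, hfg⟩
  · exfalso
    refine hd s(⟨0, by omega⟩, ⟨1, by omega⟩) ((h _).2 (by simp)) s(⟨2, by omega⟩, ⟨3, by omega⟩)
      ((h _).2 (by simp)) ?_
    intro v hv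
    simp only [Sym2.mem_iff] at hv ⊢
    rcases hv with rfl | rfl <;> simp
  have hfd := (h f).1 (by simp [hf])
  have hgd := (h g).1 (by simp)
  have hPn : P.Nodup := (List.nodup_append.1 hn).1
  have h2 := del_le_two P hPn hP hf hfg hfd hgd
  have hlen := List.length_eq_length_filter_add (l := P) (fun x => decide (Dj x g))
  have hpre : f ∈ P.filter fun x => Dj x g := by simp [hf, hfg]
  have hsubP : (P.filter fun x => Dj x g).Sublist P := List.filter_sublist
  have hprop : ∀ x ∈ P.filter (fun x => Dj x g), Dj x g := by
    intro x hx; simpa using (List.mem_filter.1 hx).2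
  have hlen2 : (P.filter fun x => Dj x g).length + 2 ≥ P.length := by
    have : (P.filter fun x => !decide (Dj x g)) = (P.filter fun x => ¬ Dj x g) := by
      congr 1; ext x; simp
    rw [this] at hlen
    omega
  generalize (P.filter fun x => Dj x g) = pre at *
  cases pre with
  | nil => simp at hpre
  | cons e pre =>
    have he := (h e).1 (by
      have := hsubP.subset (a := e) (by simp)
      simp [this])
    obtain ⟨a, b, h3, h4, h5⟩ := Pat.one he pre
    have hlt2 : a + 1 + 2 ≤ (vset (e :: pre ++ [g])).card := by
      -- both endpoints of `g` are new
      induction g using Sym2.ind with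
      | _ c d =>
      have hcd : c ≠ d := by simpa using hgd
      have hdis : Disjoint (vset (e :: pre)) {c, d} := by
        rw [Finset.disjoint_left]
        intro v hv hv2
        rw [mem_vset] at hv
        obtain ⟨x, hx, hvx⟩ := hv
        exact hprop x hx v hvx (by simpa using hv2)
      have hss : vset (e :: pre) ∪ {c, d} ⊆ vset (e :: pre ++ [s(c, d)]) := by
        intro v hv
        rw [mem_vset_append]
        rw [Finset.mem_union] at hv
        rcases hv with hv | hv
        · exact Or.inl hv
        · exact Or.inr (by simpa using hv)
      have := Finset.card_le_card hss
      rw [Finset.card_union_of_disjoint hdis, Finset.card_pair hcd] at this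
      omega
    obtain ⟨a', b', h6, h7, h8⟩ := Pat.ext 2 post (Pat.opn g h3) (by omega)
    have hv := vset_card_le (e :: pre ++ [g] ++ post)
    refine ⟨_, ?_, a', b', h6, by omega, ?_⟩
    · rw [List.append_assoc]
      exact hsubP.append (List.Sublist.refl _)
    · simp only [List.length_append, List.length_cons] at hl h5 hlen2
      omega

theorem comb4 : Comb 4 2 2 := comb_big (le_refl 4)
theorem comb5 : Comb 5 3 5 := comb_big (by norm_num : 4 ≤ 5)

/-! ### The lower bound -/

theorem pullback {m : ℕ} (f : Fin m → ℕ) (hf : Function.Injective f) (S : List (Sym2 ℕ)) :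
    ∃ L0 : List (Sym2 (Fin m)), L0.Nodup ∧ (L0.map (Sym2.map f)).Sublist S ∧
      (∀ e ∈ L0, ¬ e.IsDiag) ∧ ∀ e, ¬ e.IsDiag → Sym2.map f e ∈ S → e ∈ L0 := by
  induction S with
  | nil => exact ⟨[], by simp, by simp, by simp, by simp⟩
  | cons s S ih =>
    obtain ⟨L0, h1, h2, h3, h4⟩ := ih
    by_cases hc : ∃ e, ¬ e.IsDiag ∧ Sym2.map f e = s ∧ e ∉ L0
    · obtain ⟨e, he1, he2, he3⟩ := hc
      refine ⟨e :: L0, List.nodup_cons.2 ⟨he3, h1⟩, ?_, ?_, ?_⟩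
      · rw [List.map_cons, he2, List.cons_sublist_cons]; exact h2
      · intro x hx
        rcases List.mem_cons.1 hx with rfl | hx
        · exact he1
        · exact h3 x hx
      · intro x hx hxS
        rcases List.mem_cons.1 hxS with hx2 | hx2
        · rw [Sym2.map.injective hf (hx2.trans he2.symm)]; simp
        · exact List.mem_cons_of_mem _ (h4 x hx hx2)
    · push Not at hc
      refine ⟨L0, h1, h2.trans (List.sublist_cons_self _ _), h3, ?_⟩
      intro x hx hxS
      rcases List.mem_cons.1 hxS with hx2 | hx2
      · exact hc x hx hx2
      · exact h4 x hx hx2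

/-- the finite family of cheap patterns -/
def patsSet (m a0 b0 : ℕ) : Set (List (Sym2 (Fin m))) :=
  {L | L.length ≤ Fintype.card (Sym2 (Fin m)) ∧ ∃ a b, Pat L a b ∧ a ≤ a0 ∧ b0 ≤ b}

theorem patsSet_finite (m a0 b0 : ℕ) : (patsSet m a0 b0).Finite :=
  (List.finite_length_le (Sym2 (Fin m)) _).subset fun _ h => h.1

/-- the finite family of cheap patterns -/
noncomputable def pats (m a0 b0 : ℕ) : Finset (List (Sym2 (Fin m))) :=
  (patsSet_finite m a0 b0).toFinset

theorem cover {m a0 b0 : ℕ} (hc : Comb m a0 b0) {B : ℕ} (hB : 0 < B) (S : List (Sym2 ℕ))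
    (hS : ∀ e ∈ S, ∀ x ∈ e, x < B) :
    ind (Has m {e | e ∈ S}) ≤ ∑ L ∈ pats m a0 b0, cnt B L S := by
  have hnn : ∀ L : List (Sym2 (Fin m)), 0 ≤ cnt B L S := fun L =>
    Finset.sum_nonneg fun _ _ => ind_nonneg _
  by_cases hH : Has m {e | e ∈ S}
  · rw [ind_true hH]
    obtain ⟨f, hf, hfS⟩ := hH
    obtain ⟨L0, h1, h2, h3, h4⟩ := pullback f hf S
    have h5 : ∀ e, e ∈ L0 ↔ ¬ e.IsDiag := by
      refine fun e => ⟨h3 e, fun he => h4 e he ?_⟩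
      induction e using Sym2.ind with
      | _ u v => exact hfS u v (by simpa using he)
    obtain ⟨L, hL, a, b, hP, ha, hb⟩ := hc L0 h1 h5
    have hmem : L ∈ pats m a0 b0 := by
      simp only [pats, Set.Finite.mem_toFinset, patsSet, Set.mem_ofPred_eq]
      exact ⟨(h1.sublist hL).length_le_card, a, b, hP, ha, hb⟩
    refine le_trans ?_ (Finset.single_le_sum (fun L _ => hnn L) hmem)
    have hsub : (L.map (Sym2.map f)).Sublist S := (hL.map _).trans h2
    have hmap : L.map (Sym2.map fun w => if w ∈ vset L then f w else 0) = L.map (Sym2.map f) := by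
      refine List.map_congr_left fun e he => Sym2.map_congr fun w hw => ?_
      rw [if_pos (mem_vset.2 ⟨e, he, hw⟩)]
    have hmaps : (fun w => if w ∈ vset L then f w else 0) ∈ maps B L := by
      simp only [maps, Finset.mem_filter, Fintype.mem_piFinset, Finset.mem_range]
      refine ⟨fun w => ?_, fun w hw => by simp [hw]⟩
      split_ifs with hw
      · obtain ⟨e, he, hwe⟩ := mem_vset.1 hw
        refine hS (Sym2.map f e) (hsub.subset (List.mem_map_of_mem he)) _ ?_
        exact Sym2.mem_map.2 ⟨w, hwe, rfl⟩
      · exact hB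
    unfold cnt
    refine le_trans ?_ (Finset.single_le_sum (fun f _ => ind_nonneg _) hmaps)
    rw [ind_true (by rw [hmap]; exact hsub)]
  · rw [ind_false hH]
    exact Finset.sum_nonneg fun L _ => hnn L

theorem exists_bound (Q : List Bool → Sym2 ℕ) (N : ℕ) : ∃ B : ℕ, 0 < B ∧
    ∀ h : List Bool, h.length = N → ∀ e ∈ succL Q h, ∀ x ∈ e, x < B := by
  have h1 : ∀ S : List (Sym2 ℕ), ∃ B : ℕ, ∀ e ∈ S, ∀ x ∈ e, x < B := by
    intro S
    induction S with
    | nil => exact ⟨0, by simp⟩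
    | cons s S ih =>
      obtain ⟨B, hB⟩ := ih
      induction s using Sym2.ind with
      | _ u v =>
      refine ⟨B + u + v + 1, fun e he x hx => ?_⟩
      rcases List.mem_cons.1 he with rfl | he
      · rcases Sym2.mem_iff.1 hx with rfl | rfl <;> omega
      · have := hB e he x hx; omega
  choose b hb using fun h => h1 (succL Q h)
  refine ⟨(List.finite_length_eq Bool N).toFinset.sup b + 1, by omega, fun h hh e he x hx => ?_⟩
  have h2 := hb h e he x hx
  have h3 : b h ≤ (List.finite_length_eq Bool N).toFinset.sup b :=
    Finset.le_sup (f := b) (by simpa using hh)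
  omega

theorem lower {m a0 b0 : ℕ} (hm : 2 ≤ m) (hc : Comb m a0 b0) : ∃ C0 : ℝ, 0 < C0 ∧
    ∀ (p : ℝ), 0 < p → p < 1 → ∀ (N : ℕ) (Q : List Bool → Sym2 ℕ), ValidBuilder Q →
      (1 : ℝ) / 2 ≤ queryProb (K m) Q N p → 1 / 4 ≤ C0 * ((p * N) ^ a0 * p ^ b0) := by
  refine ⟨(pats m a0 b0).card * 8 ^ a0 + 1, by positivity, ?_⟩
  intro p hp0 hp1 N Q hQ hq
  rw [queryProb_eq] at hq
  have hX : 0 ≤ 4 * (p * N) := by positivity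
  set M := ⌊4 * (p * N)⌋₊ with hM
  have hM1 : (M : ℝ) ≤ 4 * (p * N) := Nat.floor_le hX
  have hM2 : 4 * (p * N) < M + 1 := Nat.lt_floor_add_one _
  obtain ⟨B, hB, hBv⟩ := exists_bound Q N
  have hA : Ee p N (fun h => (1 / ((M : ℝ) + 1)) * ((succL Q h).length : ℝ)) ≤ 1 / 4 := by
    rw [Ee_mul, Ee_length, one_div, inv_mul_le_iff₀ (by positivity)]
    linarith
  have hsplit : (1 : ℝ) / 2 ≤ Ee p N (fun h => (1 / ((M : ℝ) + 1)) * ((succL Q h).length : ℝ)) +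
      Ee p N (fun h => ind (Has m {e | e ∈ (succL Q h).take M})) := by
    rw [← Ee_add]
    refine hq.trans (Ee_mono hp0.le hp1.le N fun h _ => ?_)
    by_cases hl : (succL Q h).length ≤ M
    · rw [List.take_of_length_le hl]
      have : 0 ≤ (1 / ((M : ℝ) + 1)) * ((succL Q h).length : ℝ) := by positivity
      have h2 : (if Has m {e | e ∈ succL Q h} then (1 : ℝ) else 0) = ind (Has m {e | e ∈ succL Q h}) := rfl
      linarith
    · have h3 : (M : ℝ) + 1 ≤ (succL Q h).length := by exact_mod_cast (not_le.1 hl)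
      have h4 : 1 ≤ (1 / ((M : ℝ) + 1)) * ((succL Q h).length : ℝ) := by
        rw [one_div, inv_mul_eq_div, le_div_iff₀ (by positivity)]; linarith
      have h5 := ind_nonneg (Has m {e | e ∈ (succL Q h).take M})
      have h6 : (if Has m {e | e ∈ succL Q h} then (1 : ℝ) else 0) ≤ 1 := ind_le_one _
      linarith
  have h14 : 1 / 4 ≤ Ee p N (fun h => ind (Has m {e | e ∈ (succL Q h).take M})) := by linarith
  have hM0 : 1 ≤ M := by
    by_contra hcon
    have hM0 : M = 0 := by omega
    rw [hM0] at h14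
    have : Ee p N (fun h => ind (Has m {e | e ∈ (succL Q h).take 0})) ≤ 0 := by
      refine le_trans (Ee_mono hp0.le hp1.le N (G := fun _ => 0) fun h _ => ?_) (Ee_const p 0 N).le
      rw [ind_false]
      rintro ⟨f, -, h2⟩
      have := h2 ⟨0, by omega⟩ ⟨1, by omega⟩ (by simp)
      simp at this
    linarith
  have hM0' : (1 : ℝ) ≤ M := by exact_mod_cast hM0
  have hcov : Ee p N (fun h => ind (Has m {e | e ∈ (succL Q h).take M})) ≤
      ∑ L ∈ pats m a0 b0, ((2 * M) ^ a0 * p ^ b0 : ℝ) := by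
    refine le_trans (Ee_mono hp0.le hp1.le N
      (G := fun h => ∑ L ∈ pats m a0 b0, cnt B L ((succL Q h).take M)) fun h hh =>
        cover hc hB _ fun e he => hBv h hh e (List.mem_of_mem_take he)) ?_
    rw [Ee_sum]
    refine Finset.sum_le_sum fun L hL => ?_
    simp only [pats, Set.Finite.mem_toFinset, patsSet, Set.mem_ofPred_eq] at hL
    obtain ⟨-, a, b, hP, ha, hb⟩ := hL
    refine (Ee_cnt_le hp0.le hp1.le hB M N Q hQ hP).trans ?_
    have e1 : (2 * M : ℝ) ^ a ≤ (2 * M) ^ a0 := pow_le_pow_right₀ (by linarith) ha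
    have e2 : p ^ b ≤ p ^ b0 := pow_le_pow_of_le_one hp0.le hp1.le hb
    gcongr
  rw [Finset.sum_const, nsmul_eq_mul] at hcov
  have e3 : (2 * M : ℝ) ^ a0 ≤ 8 ^ a0 * (p * N) ^ a0 := by
    rw [← mul_pow]
    exact pow_le_pow_left₀ (by positivity) (by linarith) _
  have e4 : 0 ≤ (p * N) ^ a0 * p ^ b0 := by positivity
  calc (1 : ℝ) / 4 ≤ _ := h14
    _ ≤ _ := hcov
    _ ≤ (pats m a0 b0).card * (8 ^ a0 * (p * N) ^ a0 * p ^ b0) := by gcongr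
    _ ≤ _ := by nlinarith

/-- the lower bound in the form needed -/
theorem lower' {m a0 b0 : ℕ} (hm : 2 ≤ m) (ha : 1 ≤ a0) (hc : Comb m a0 b0) : ∃ c : ℝ, 0 < c ∧
    ∀ (p y : ℝ), 0 < p → p < 1 → 0 < y → y ^ a0 * p ^ (a0 + b0) = 1 →
      ∀ (N : ℕ) (Q : List Bool → Sym2 ℕ), ValidBuilder Q →
      (1 : ℝ) / 2 ≤ queryProb (K m) Q N p → c * y ≤ N := by
  obtain ⟨C0, hC0, h⟩ := lower hm hc
  refine ⟨min 1 (1 / (8 * C0)), by positivity, ?_⟩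
  intro p y hp0 hp1 hy hyp N Q hQ hq
  have h1 := h p hp0 hp1 N Q hQ hq
  by_contra hcon
  push Not at hcon
  set c := min 1 (1 / (8 * C0)) with hcdef
  have hc0 : 0 < c := by positivity
  have h2 : (p * N) ^ a0 * p ^ b0 ≤ c ^ a0 := by
    calc (p * N) ^ a0 * p ^ b0 ≤ (p * (c * y)) ^ a0 * p ^ b0 := by gcongr
      _ = c ^ a0 * (y ^ a0 * p ^ (a0 + b0)) := by rw [mul_pow, mul_pow, pow_add]; ring
      _ = c ^ a0 := by rw [hyp, mul_one]
  have h3 : c ^ a0 ≤ c := pow_le_of_le_one hc0.le (min_le_left _ _) (by omega)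
  have h4 : c ≤ 1 / (8 * C0) := min_le_right _ _
  have h5 : C0 * ((p * N) ^ a0 * p ^ b0) ≤ C0 * (1 / (8 * C0)) := by
    gcongr; linarith
  have h6 : C0 * (1 / (8 * C0)) = 1 / 8 := by field_simp
  linarith

/-! ### Final assembly -/

theorem rpow_pow_aux {p : ℝ} (hp : 0 < p) (s t : ℝ) (n : ℕ) (h : s * n = t) :
    (p ^ s) ^ n = p ^ t := by
  rw [← Real.rpow_natCast, ← Real.rpow_mul hp.le, h]

theorem rpow_one_aux {p : ℝ} (hp : 0 < p) (s : ℝ) (n k : ℕ) (h : s * n + k = 0) :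
    (p ^ s) ^ n * p ^ k = 1 := by
  rw [← Real.rpow_natCast (p ^ s), ← Real.rpow_mul hp.le, ← Real.rpow_natCast p k,
    ← Real.rpow_add hp, h, Real.rpow_zero]

theorem both {m a0 b0 : ℕ} {c p y : ℝ} (hp0 : 0 < p) (hp1 : p < 1) (hy : 0 < y)
    (hyp : y ^ a0 * p ^ (a0 + b0) = 1)
    (hl : ∀ (p y : ℝ), 0 < p → p < 1 → 0 < y → y ^ a0 * p ^ (a0 + b0) = 1 →
      ∀ (N : ℕ) (Q : List Bool → Sym2 ℕ), ValidBuilder Q →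
      (1 : ℝ) / 2 ≤ queryProb (K m) Q N p → c * y ≤ N)
    (hu : ∃ N : ℕ, (N : ℝ) ≤ 40000 * y ∧ Win p m N ∅ ∅ (1 / 2)) :
    c * y ≤ (fQuery (K m) p : ℝ) ∧ (fQuery (K m) p : ℝ) ≤ 40000 * y := by
  obtain ⟨N, hN, hW⟩ := hu
  obtain ⟨Q, hQ, hq⟩ := hW.query hp0.le hp1.le
  have hmem : N ∈ {N | ∃ Q : List Bool → Sym2 ℕ, ValidBuilder Q ∧
      (1 : ℝ) / 2 ≤ queryProb (K m) Q N p} := ⟨Q, hQ, hq⟩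
  constructor
  · obtain ⟨Q', hQ', hq'⟩ := Nat.sInf_mem ⟨N, hmem⟩
    exact hl p y hp0 hp1 hy hyp _ Q' hQ' hq'
  · refine le_trans ?_ hN
    exact_mod_cast Nat.sInf_le hmem

theorem stmt8 :
    ∃ c C : ℝ, 0 < c ∧ 0 < C ∧ ∀ p : ℝ, p ∈ Set.Ioo (0 : ℝ) 1 →
      (c * p ^ (-(3 : ℝ) / 2) ≤ (fQuery (K 3) p : ℝ) ∧
        (fQuery (K 3) p : ℝ) ≤ C * p ^ (-(3 : ℝ) / 2)) ∧
      (c * p ^ (-(2 : ℝ)) ≤ (fQuery (K 4) p : ℝ) ∧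
        (fQuery (K 4) p : ℝ) ≤ C * p ^ (-(2 : ℝ))) ∧
      (c * p ^ (-(8 : ℝ) / 3) ≤ (fQuery (K 5) p : ℝ) ∧
        (fQuery (K 5) p : ℝ) ≤ C * p ^ (-(8 : ℝ) / 3)) := by
  obtain ⟨c3, hc3, h3⟩ := lower' (by norm_num) (by norm_num) comb3
  obtain ⟨c4, hc4, h4⟩ := lower' (by norm_num) (by norm_num) comb4
  obtain ⟨c5, hc5, h5⟩ := lower' (by norm_num) (by norm_num) comb5
  refine ⟨min c3 (min c4 c5), 40000, by positivity, by norm_num, ?_⟩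
  rintro p ⟨hp0, hp1⟩
  have m3 : min c3 (min c4 c5) ≤ c3 := min_le_left _ _
  have m4 : min c3 (min c4 c5) ≤ c4 := (min_le_right _ _).trans (min_le_left _ _)
  have m5 : min c3 (min c4 c5) ≤ c5 := (min_le_right _ _).trans (min_le_right _ _)
  have hone : ∀ s : ℝ, s ≤ 0 → 1 ≤ p ^ s := fun s hs =>
    Real.one_le_rpow_of_pos_of_le_one_of_nonpos hp0 hp1.le hs
  have b3 := both hp0 hp1 (Real.rpow_pos_of_pos hp0 (-(3 : ℝ) / 2))
    (rpow_one_aux hp0 _ _ _ (by norm_num)) h3 (by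
      have := up3 (hone (-1 / 2) (by norm_num)) hp0 hp1.le (by
        have := rpow_one_aux hp0 (-1 / 2) 2 1 (by norm_num)
        linarith)
      rwa [rpow_pow_aux hp0 (-1 / 2) (-(3 : ℝ) / 2) 3 (by norm_num)] at this)
  have b4 := both hp0 hp1 (Real.rpow_pos_of_pos hp0 (-(2 : ℝ)))
    (rpow_one_aux hp0 _ _ _ (by norm_num)) h4 (by
      have := up4 (hone (-1) (by norm_num)) hp0 hp1.le (by
        have := rpow_one_aux hp0 (-1) 1 1 (by norm_num)
        linarith)
      rwa [rpow_pow_aux hp0 (-1) (-(2 : ℝ)) 2 (by norm_num)] at this)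
  have b5 := both hp0 hp1 (Real.rpow_pos_of_pos hp0 (-(8 : ℝ) / 3))
    (rpow_one_aux hp0 _ _ _ (by norm_num)) h5 (by
      have := up5 (hone (-1 / 3) (by norm_num)) hp0 hp1.le (by
        have := rpow_one_aux hp0 (-1 / 3) 3 1 (by norm_num)
        linarith)
      rwa [rpow_pow_aux hp0 (-1 / 3) (-(8 : ℝ) / 3) 8 (by norm_num)] at this)
  have q3 := mul_le_mul_of_nonneg_right m3 (Real.rpow_pos_of_pos hp0 (-(3 : ℝ) / 2)).le
  have q4 := mul_le_mul_of_nonneg_right m4 (Real.rpow_pos_of_pos hp0 (-(2 : ℝ))).le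
  have q5 := mul_le_mul_of_nonneg_right m5 (Real.rpow_pos_of_pos hp0 (-(8 : ℝ) / 3)).le
  exact ⟨⟨q3.trans b3.1, b3.2⟩, ⟨q4.trans b4.1, b4.2⟩, ⟨q5.trans b5.1, b5.2⟩⟩

end OnlineRamseyGame
end

section
/- There is an absolute constant C > 0 such that for every integer m ≥ 3 there is a constant c_m > 0 with the property that for all p ∈ (0,1), f(K_m, p) ≥ c_m · p^(−((2−√2)m − C)). -/
open scoped Classical

namespace OnlineRamseyGame

/-! ### Pathwise counting -/

def supp {m : ℕ} (E : Finset (Sym2 (Fin m))) : Finset (Fin m) :=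
  Finset.univ.filter (fun v => ∃ e ∈ E, v ∈ e)

lemma mem_supp {m : ℕ} {E : Finset (Sym2 (Fin m))} {v : Fin m} :
    v ∈ supp E ↔ ∃ e ∈ E, v ∈ e := by simp [supp]

lemma supp_mono {m : ℕ} {E F : Finset (Sym2 (Fin m))} (h : E ⊆ F) : supp E ⊆ supp F := by
  intro v hv
  rw [mem_supp] at *
  obtain ⟨e, he, hv⟩ := hv
  exact ⟨e, h he, hv⟩

def Succ (Q : List Bool → Sym2 ℕ) (x : ℕ → Bool) (t : ℕ) (e : Sym2 ℕ) : Prop :=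
  ∃ i, i < t ∧ Q (histSeq x i) = e ∧ x i = true

lemma Succ.mono {Q : List Bool → Sym2 ℕ} {x : ℕ → Bool} {t t' : ℕ} {e : Sym2 ℕ}
    (h : Succ Q x t e) (ht : t ≤ t') : Succ Q x t' e := by
  obtain ⟨i, hi, h⟩ := h
  exact ⟨i, by omega, h⟩

noncomputable def cop {m : ℕ} (M : ℕ) (Q : List Bool → Sym2 ℕ) (x : ℕ → Bool) (t : ℕ)
    (E : Finset (Sym2 (Fin m))) : Finset (Fin m → ℕ) :=
  (Fintype.piFinset (fun _ => Finset.range M)).filter (fun φ =>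
    (∀ v, v ∉ supp E → φ v = 0) ∧ Set.InjOn (Sym2.map φ) (E : Set (Sym2 (Fin m))) ∧
      ∀ e ∈ E, Succ Q x t (Sym2.map φ e))

noncomputable def Yset {m : ℕ} (M : ℕ) (Q : List Bool → Sym2 ℕ) (x : ℕ → Bool) (t : ℕ)
    (E : Finset (Sym2 (Fin m))) (e : Sym2 (Fin m)) : Finset (Fin m → ℕ) :=
  (Fintype.piFinset (fun _ => Finset.range M)).filter (fun φ =>
    (∀ v, v ∉ supp E → φ v = 0) ∧ Set.InjOn (Sym2.map φ) (E : Set (Sym2 (Fin m))) ∧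
      (∀ f ∈ E.erase e, Succ Q x t (Sym2.map φ f)) ∧ Q (histSeq x t) = Sym2.map φ e)

lemma histSeq_congr {x y : ℕ → Bool} {t : ℕ} (h : ∀ i < t, x i = y i) :
    histSeq x t = histSeq y t := by
  unfold histSeq
  apply List.map_congr_left
  intro i hi
  exact h i (List.mem_range.1 hi)

lemma Yset_congr {m : ℕ} (M : ℕ) (Q : List Bool → Sym2 ℕ) {x y : ℕ → Bool} {t : ℕ}
    (E : Finset (Sym2 (Fin m))) (e : Sym2 (Fin m)) (h : ∀ i < t, x i = y i) :
    Yset M Q x t E e = Yset M Q y t E e := by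
  have hS : ∀ f, Succ Q x t f ↔ Succ Q y t f := by
    intro f
    unfold Succ
    apply exists_congr
    intro i
    apply and_congr_right
    intro hi
    rw [h i hi, histSeq_congr (fun j hj => h j (by omega))]
  unfold Yset
  rw [histSeq_congr h]
  simp only [hS]

lemma histSeq_take_s9 (x : ℕ → Bool) {i j : ℕ} (h : i ≤ j) :
    (histSeq x j).take i = histSeq x i := by
  unfold histSeq
  rw [← List.map_take, List.take_range, min_eq_left h]

lemma Q_inj {Q : List Bool → Sym2 ℕ} (hQ : ValidBuilder Q) (x : ℕ → Bool) {i j : ℕ}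
    (h : Q (histSeq x i) = Q (histSeq x j)) : i = j := by
  have key : ∀ i j : ℕ, i < j → Q (histSeq x i) ≠ Q (histSeq x j) := by
    intro i j hij
    have := hQ.2 (histSeq x j) i (by simpa [histSeq] using hij)
    rwa [histSeq_take_s9 x hij.le] at this
  rcases lt_trichotomy i j with h1 | h1 | h1
  · exact absurd h (key _ _ h1)
  · exact h1
  · exact absurd h.symm (key _ _ h1)

lemma cop_card_le {m : ℕ} (M : ℕ) (Q : List Bool → Sym2 ℕ) (x : ℕ → Bool) (N : ℕ)
    (E : Finset (Sym2 (Fin m))) (hE : E.Nonempty) :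
    (cop M Q x N E).card ≤ ∑ e ∈ E, ∑ t ∈ Finset.range N,
      if x t = true then (Yset M Q x t E e).card else 0 := by
  have hsub : cop M Q x N E ⊆ E.biUnion (fun e => (Finset.range N).biUnion (fun t =>
      if x t = true then Yset M Q x t E e else ∅)) := by
    intro φ hφ
    simp only [cop, Finset.mem_filter] at hφ
    obtain ⟨h0, h1, h2, h3⟩ := hφ
    choose! τ hτ using h3
    obtain ⟨e, he, hmax⟩ := E.exists_max_image τ hE
    simp only [Finset.mem_biUnion, Finset.mem_range]
    refine ⟨e, he, τ e, (hτ e he).1, ?_⟩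
    rw [if_pos (hτ e he).2.2]
    simp only [Yset, Finset.mem_filter]
    refine ⟨h0, h1, h2, ?_, (hτ e he).2.1⟩
    intro f hf
    obtain ⟨hfe, hf⟩ := Finset.mem_erase.1 hf
    refine ⟨τ f, lt_of_le_of_ne (hmax f hf) ?_, (hτ f hf).2⟩
    intro heq
    apply hfe
    apply h2 hf he
    rw [← (hτ f hf).2.1, ← (hτ e he).2.1, heq]
  refine (Finset.card_le_card hsub).trans (Finset.card_biUnion_le.trans ?_)
  apply Finset.sum_le_sum
  intro e _
  refine Finset.card_biUnion_le.trans ?_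
  apply Finset.sum_le_sum
  intro t _
  split_ifs <;> simp

lemma Y_sum_le {m : ℕ} (M : ℕ) {Q : List Bool → Sym2 ℕ} (hQ : ValidBuilder Q) (x : ℕ → Bool)
    (N : ℕ) (E : Finset (Sym2 (Fin m))) (e : Sym2 (Fin m)) (hs : supp (E.erase e) = supp E) :
    ∑ t ∈ Finset.range N, (Yset M Q x t E e).card ≤ (cop M Q x N (E.erase e)).card := by
  rw [← Finset.card_biUnion]
  · apply Finset.card_le_card
    intro φ hφ
    simp only [Finset.mem_biUnion, Finset.mem_range, Yset, Finset.mem_filter] at hφ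
    obtain ⟨t, ht, h0, h1, h2, h3, h4⟩ := hφ
    simp only [cop, Finset.mem_filter]
    refine ⟨h0, by rwa [hs], h2.mono (by simp), ?_⟩
    intro f hf
    exact (h3 f hf).mono ht.le
  · intro t _ t' _ htt'
    rw [Function.onFun, Finset.disjoint_left]
    intro φ hφ hφ'
    simp only [Yset, Finset.mem_filter] at hφ hφ'
    exact htt' (Q_inj hQ x (hφ.2.2.2.2.trans hφ'.2.2.2.2.symm))

lemma map_congr_supp {m : ℕ} {φ ψ : Fin m → ℕ} (e : Sym2 (Fin m)) (h : ∀ v ∈ e, φ v = ψ v) :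
    Sym2.map φ e = Sym2.map ψ e := Sym2.map_congr h

lemma Y_card_le {m : ℕ} (M : ℕ) (Q : List Bool → Sym2 ℕ) (x : ℕ → Bool)
    {N t : ℕ} (ht : t < N) (E E' : Finset (Sym2 (Fin m))) (u v : Fin m) (huv : u ≠ v)
    (hE' : E' ⊆ E.erase s(u, v)) (hs : ∀ w ∈ supp E, w = u ∨ w = v ∨ w ∈ supp E') :
    (Yset M Q x t E s(u, v)).card ≤ 2 * (cop M Q x N E').card := by
  let ρ : (Fin m → ℕ) → (Fin m → ℕ) := fun φ w => if w ∈ supp E' then φ w else 0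
  have hρ : ∀ φ : Fin m → ℕ, ∀ f ∈ E', Sym2.map (ρ φ) f = Sym2.map φ f := by
    intro φ f hf
    apply Sym2.map_congr
    intro w hw
    have : w ∈ supp E' := mem_supp.2 ⟨f, hf, hw⟩
    simp [ρ, this]
  apply Finset.card_le_mul_card_image_of_maps_to (f := ρ)
  · intro φ hφ
    simp only [Yset, Finset.mem_filter] at hφ
    obtain ⟨h0, h1, h2, h3, h4⟩ := hφ
    simp only [cop, Finset.mem_filter]
    refine ⟨?_, ?_, ?_, ?_⟩
    · simp only [Fintype.mem_piFinset, Finset.mem_range] at h0 ⊢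
      intro w
      have := h0 w
      simp only [ρ]
      split_ifs <;> omega
    · intro w hw
      simp [ρ, hw]
    · intro f hf g hg hfg
      rw [hρ φ f hf, hρ φ g hg] at hfg
      exact h2 (Finset.mem_of_mem_erase (hE' hf)) (Finset.mem_of_mem_erase (hE' hg)) hfg
    · intro f hf
      rw [hρ φ f hf]
      exact (h3 f (hE' hf)).mono ht.le
  · intro ψ _
    obtain ⟨a, b, hab⟩ : ∃ a b, Q (histSeq x t) = s(a, b) := by
      induction Q (histSeq x t) using Sym2.ind with
      | _ a b => exact ⟨a, b, rfl⟩
    have hsub : (Yset M Q x t E s(u, v)).filter (fun φ => ρ φ = ψ) ⊆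
        {Function.update (Function.update ψ u a) v b,
          Function.update (Function.update ψ u b) v a} := by
      intro φ hφ
      simp only [Yset, Finset.mem_filter] at hφ
      obtain ⟨⟨h0, h1, h2, h3, h4⟩, h5⟩ := hφ
      have hw : ∀ w, w ≠ u → w ≠ v → φ w = ψ w := by
        intro w hwu hwv
        rw [← h5]
        by_cases hw : w ∈ supp E'
        · simp [ρ, hw]
        · have : w ∉ supp E := fun h => by
            rcases hs w h with h | h | h
            · exact hwu h
            · exact hwv h
            · exact hw h
          simp [ρ, hw, h1 w this]
      rw [hab, Sym2.map_mk, Sym2.eq_iff] at h4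
      simp only [Finset.mem_insert, Finset.mem_singleton]
      rcases h4 with ⟨ha, hb⟩ | ⟨ha, hb⟩
      · left
        funext w
        by_cases h1 : w = v
        · subst h1; simp [hb]
        · by_cases h2 : w = u
          · subst h2; simp [h1, ha]
          · simp [h1, h2, hw]
      · right
        funext w
        by_cases h1 : w = v
        · subst h1; simp [ha]
        · by_cases h2 : w = u
          · subst h2; simp [h1, hb]
          · simp [h1, h2, hw]
    exact (Finset.card_le_card hsub).trans Finset.card_le_two
/-! ### Expectations -/

noncomputable def Ex (p : ℝ) {N : ℕ} (g : (Fin N → Bool) → ℝ) : ℝ := ∑ x, weight p x * g x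

lemma weight_nonneg {p : ℝ} (h0 : 0 < p) (h1 : p < 1) {N : ℕ} (x : Fin N → Bool) :
    0 ≤ weight p x := by
  unfold weight
  apply Finset.prod_nonneg
  intro i _
  split_ifs <;> linarith

lemma Ex_mono {p : ℝ} (h0 : 0 < p) (h1 : p < 1) {N : ℕ} {f g : (Fin N → Bool) → ℝ}
    (h : ∀ x, f x ≤ g x) : Ex p f ≤ Ex p g := by
  unfold Ex
  apply Finset.sum_le_sum
  intro x _
  exact mul_le_mul_of_nonneg_left (h x) (weight_nonneg h0 h1 x)

lemma Ex_sum (p : ℝ) {N : ℕ} {ι : Type*} (s : Finset ι) (f : ι → (Fin N → Bool) → ℝ) :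
    Ex p (fun x => ∑ i ∈ s, f i x) = ∑ i ∈ s, Ex p (f i) := by
  unfold Ex
  rw [Finset.sum_comm]
  simp only [Finset.mul_sum]

lemma Ex_const_mul (p : ℝ) {N : ℕ} (c : ℝ) (f : (Fin N → Bool) → ℝ) :
    Ex p (fun x => c * f x) = c * Ex p f := by
  unfold Ex
  rw [Finset.mul_sum]
  apply Finset.sum_congr rfl
  intro x _
  ring

lemma Ex_one (p : ℝ) {N : ℕ} : Ex p (fun _ : Fin N → Bool => (1 : ℝ)) = 1 := by
  unfold Ex weight
  have := Finset.prod_univ_sum (fun _ : Fin N => (Finset.univ : Finset Bool))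
    (fun _ b => if b = true then p else 1 - p)
  simp only [Fintype.piFinset_univ] at this
  simp only [mul_one]
  rw [← this]
  simp

lemma weight_update (p : ℝ) {N : ℕ} (x : Fin N → Bool) (t : Fin N) (b : Bool) :
    weight p (Function.update x t b) =
      (if b = true then p else 1 - p) * ∏ i ∈ Finset.univ.erase t, if x i = true then p else 1 - p := by
  unfold weight
  rw [← Finset.mul_prod_erase _ _ (Finset.mem_univ t)]
  congr 1
  · simp
  · apply Finset.prod_congr rfl
    intro i hi
    rw [Function.update_of_ne (Finset.ne_of_mem_erase hi)]

lemma Ex_step (p : ℝ) {N : ℕ} (t : Fin N) (g : (Fin N → Bool) → ℝ)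
    (hg : ∀ x b, g (Function.update x t b) = g x) :
    Ex p (fun x => if x t = true then g x else 0) = p * Ex p g := by
  let a := Ex p (fun x => if x t = true then g x else 0)
  let b := Ex p (fun x => if x t = true then 0 else g x)
  have hab : Ex p g = a + b := by
    simp only [a, b, Ex]
    rw [← Finset.sum_add_distrib]
    apply Finset.sum_congr rfl
    intro x _
    split_ifs <;> simp
  have hflip : (1 - p) * a = p * b := by
    simp only [a, b, Ex, Finset.mul_sum]
    let σ : (Fin N → Bool) → (Fin N → Bool) := fun x => Function.update x t (!(x t))
    have hσ : Function.Involutive σ := by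
      intro x
      simp [σ]
    apply Fintype.sum_equiv hσ.toPerm
    intro x
    simp only [Function.Involutive.coe_toPerm]
    have hw : weight p x = weight p (Function.update x t (x t)) := by simp
    simp only [σ, hg, Function.update_self]
    rw [hw, weight_update, weight_update]
    cases h : x t
    · simp
    · simp; ring
  change a = p * Ex p g
  rw [hab]
  linear_combination hflip

noncomputable def EX {m : ℕ} (p : ℝ) (M N : ℕ) (Q : List Bool → Sym2 ℕ)
    (E : Finset (Sym2 (Fin m))) : ℝ :=
  Ex p (fun x : Fin N → Bool => ((cop M Q (extSeq x) N E).card : ℝ))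

noncomputable def EY {m : ℕ} (p : ℝ) (M N : ℕ) (Q : List Bool → Sym2 ℕ)
    (E : Finset (Sym2 (Fin m))) (e : Sym2 (Fin m)) : ℝ :=
  Ex p (fun x : Fin N → Bool => ∑ t ∈ Finset.range N, ((Yset M Q (extSeq x) t E e).card : ℝ))

lemma EX_nonneg {m : ℕ} {p : ℝ} (h0 : 0 < p) (h1 : p < 1) (M N : ℕ) (Q : List Bool → Sym2 ℕ)
    (E : Finset (Sym2 (Fin m))) : 0 ≤ EX p M N Q E :=
  Finset.sum_nonneg fun x _ => mul_nonneg (weight_nonneg h0 h1 x) (by positivity)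

lemma EX_le {m : ℕ} {p : ℝ} (h0 : 0 < p) (h1 : p < 1) (M N : ℕ) (Q : List Bool → Sym2 ℕ)
    (E : Finset (Sym2 (Fin m))) (hE : E.Nonempty) :
    EX p M N Q E ≤ p * ∑ e ∈ E, EY p M N Q E e := by
  have h : EX p M N Q E ≤ Ex p (fun x : Fin N → Bool => ∑ e ∈ E, ∑ t ∈ Finset.range N,
      if extSeq x t = true then ((Yset M Q (extSeq x) t E e).card : ℝ) else 0) := by
    apply Ex_mono h0 h1
    intro x
    exact_mod_cast cop_card_le M Q (extSeq x) N E hE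
  refine h.trans (le_of_eq ?_)
  rw [Ex_sum, Finset.mul_sum]
  apply Finset.sum_congr rfl
  intro e _
  unfold EY
  rw [Ex_sum, Ex_sum, Finset.mul_sum]
  apply Finset.sum_congr rfl
  intro t ht
  have ht := Finset.mem_range.1 ht
  rw [← Ex_step p ⟨t, ht⟩]
  · congr 1
    funext x
    simp [extSeq, ht]
  · intro x b
    rw [Yset_congr M Q E e]
    intro i hi
    unfold extSeq
    split_ifs with h
    · rw [Function.update_of_ne]
      simp [Fin.ext_iff]; omega
    · rfl

lemma EY_le_one {m : ℕ} {p : ℝ} (h0 : 0 < p) (h1 : p < 1) (M N : ℕ) {Q : List Bool → Sym2 ℕ}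
    (hQ : ValidBuilder Q) (E : Finset (Sym2 (Fin m))) (e : Sym2 (Fin m))
    (hs : supp (E.erase e) = supp E) : EY p M N Q E e ≤ EX p M N Q (E.erase e) := by
  apply Ex_mono h0 h1
  intro x
  exact_mod_cast Y_sum_le M hQ (extSeq x) N E e hs

lemma EY_le_two {m : ℕ} {p : ℝ} (h0 : 0 < p) (h1 : p < 1) (M N : ℕ) (Q : List Bool → Sym2 ℕ)
    (E E' : Finset (Sym2 (Fin m))) (u v : Fin m) (huv : u ≠ v)
    (hE' : E' ⊆ E.erase s(u, v)) (hs : ∀ w ∈ supp E, w = u ∨ w = v ∨ w ∈ supp E') :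
    EY p M N Q E s(u, v) ≤ 2 * N * EX p M N Q E' := by
  unfold EX
  rw [← Ex_const_mul]
  apply Ex_mono h0 h1
  intro x
  have : ∑ t ∈ Finset.range N, (Yset M Q (extSeq x) t E s(u, v)).card ≤
      ∑ t ∈ Finset.range N, 2 * (cop M Q (extSeq x) N E').card :=
    Finset.sum_le_sum fun t ht =>
      Y_card_le M Q (extSeq x) (Finset.mem_range.1 ht) E E' u v huv hE' hs
  rw [Finset.sum_const, Finset.card_range, smul_eq_mul] at this
  have h2 : N * (2 * (cop M Q (extSeq x) N E').card) = 2 * N * (cop M Q (extSeq x) N E').card := by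
    ring
  rw [h2] at this
  exact_mod_cast this
/-! ### Matchings -/

def IsMatch {m : ℕ} (M : Finset (Sym2 (Fin m))) : Prop :=
  ∀ e ∈ M, ∀ f ∈ M, ∀ v, v ∈ e → v ∈ f → e = f

def HasMatch {m : ℕ} (E : Finset (Sym2 (Fin m))) (s : ℕ) : Prop :=
  ∃ M, M ⊆ E ∧ M.card = s ∧ IsMatch M

lemma swap_one {m : ℕ} {E M : Finset (Sym2 (Fin m))} {s : ℕ} {u v : Fin m}
    (hM : M ⊆ E) (hs : M.card = s) (hmat : IsMatch M) (he : s(u, v) ∈ M)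
    (hno : ¬ HasMatch (E.erase s(u, v)) s) (a : Fin m) (ha : ∀ f ∈ M, a ∉ f) :
    s(u, a) ∉ E := by
  intro hua
  apply hno
  have hav : a ≠ v := by
    rintro rfl
    exact ha _ he (by simp)
  have hau : a ≠ u := by
    rintro rfl
    exact ha _ he (by simp)
  have hne : s(u, a) ≠ s(u, v) := by
    simp [hav, hau]
  have hnM : s(u, a) ∉ M := fun h => ha _ h (by simp)
  refine ⟨insert s(u, a) (M.erase s(u, v)), ?_, ?_, ?_⟩
  · intro f hf
    rcases Finset.mem_insert.1 hf with rfl | hf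
    · exact Finset.mem_erase.2 ⟨hne, hua⟩
    · exact Finset.mem_erase.2 ⟨Finset.ne_of_mem_erase hf, hM (Finset.mem_of_mem_erase hf)⟩
  · rw [Finset.card_insert_of_notMem (fun h => hnM (Finset.mem_of_mem_erase h)),
      Finset.card_erase_add_one he, hs]
  · have key : ∀ f ∈ M.erase s(u, v), ∀ w, w ∈ f → w ∉ s(u, a) := by
      intro f hf w hw hwa
      rcases Sym2.mem_iff.1 hwa with rfl | rfl
      · exact Finset.ne_of_mem_erase hf
          (hmat f (Finset.mem_of_mem_erase hf) _ he w hw (by simp))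
      · exact ha f (Finset.mem_of_mem_erase hf) hw
    intro f hf g hg w hwf hwg
    rcases Finset.mem_insert.1 hf with rfl | hf <;> rcases Finset.mem_insert.1 hg with rfl | hg
    · rfl
    · exact absurd hwf (key g hg w hwg)
    · exact absurd hwg (key f hf w hwf)
    · exact hmat f (Finset.mem_of_mem_erase hf) g (Finset.mem_of_mem_erase hg) w hwf hwg

lemma swap_two {m : ℕ} {E M : Finset (Sym2 (Fin m))} {s : ℕ} {u v : Fin m} (huv : u ≠ v)
    (hM : M ⊆ E) (hs : M.card = s) (hmat : IsMatch M) (he : s(u, v) ∈ M)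
    (hno : ¬ HasMatch (E.erase s(u, v)) s) (a b : Fin m) (hab : a ≠ b)
    (hf : s(a, b) ∈ M) (hne : s(a, b) ≠ s(u, v)) :
    ¬ (s(u, a) ∈ E ∧ s(v, b) ∈ E) := by
  rintro ⟨h1, h2⟩
  apply hno
  have hau : a ≠ u := by
    rintro rfl; exact hne (hmat _ hf _ he a (by simp) (by simp))
  have hav : a ≠ v := by
    rintro rfl; exact hne (hmat _ hf _ he a (by simp) (by simp))
  have hbu : b ≠ u := by
    rintro rfl; exact hne (hmat _ hf _ he b (by simp) (by simp))
  have hbv : b ≠ v := by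
    rintro rfl; exact hne (hmat _ hf _ he b (by simp) (by simp))
  set R := (M.erase s(u, v)).erase s(a, b) with hR
  have hRM : ∀ f ∈ R, f ∈ M ∧ f ≠ s(u, v) ∧ f ≠ s(a, b) := by
    intro f hf
    rw [hR, Finset.mem_erase, Finset.mem_erase] at hf
    tauto
  have key : ∀ f ∈ R, ∀ w, w ∈ f → w ≠ u ∧ w ≠ v ∧ w ≠ a ∧ w ≠ b := by
    intro f hfR w hw
    obtain ⟨q1, q2, q3⟩ := hRM f hfR
    refine ⟨?_, ?_, ?_, ?_⟩ <;> rintro rfl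
    · exact q2 (hmat f q1 _ he w hw (by simp))
    · exact q2 (hmat f q1 _ he w hw (by simp))
    · exact q3 (hmat f q1 _ hf w hw (by simp))
    · exact q3 (hmat f q1 _ hf w hw (by simp))
  have n1 : s(u, a) ∉ R := fun h => (key _ h u (by simp)).1 rfl
  have n2 : s(v, b) ∉ R := fun h => (key _ h v (by simp)).2.1 rfl
  have n3 : s(u, a) ≠ s(v, b) := by simp [huv, hbu.symm]
  have n4 : s(u, a) ≠ s(u, v) := by simp [hav, hau]
  have n5 : s(v, b) ≠ s(u, v) := by simp [hbu, hbv]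
  have hcard : R.card + 2 = s := by
    have e1 := Finset.card_erase_add_one he
    have e2 := Finset.card_erase_add_one (Finset.mem_erase.2 ⟨hne, hf⟩)
    rw [← hR] at e2
    omega
  refine ⟨insert s(u, a) (insert s(v, b) R), ?_, ?_, ?_⟩
  · intro f hf
    rw [Finset.mem_insert, Finset.mem_insert] at hf
    rcases hf with rfl | rfl | hf
    · exact Finset.mem_erase.2 ⟨n4, h1⟩
    · exact Finset.mem_erase.2 ⟨n5, h2⟩
    · exact Finset.mem_erase.2 ⟨(hRM f hf).2.1, hM (hRM f hf).1⟩
  · rw [Finset.card_insert_of_notMem, Finset.card_insert_of_notMem n2]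
    · omega
    · rw [Finset.mem_insert]; tauto
  · intro f hf g hg w hwf hwg
    rw [Finset.mem_insert, Finset.mem_insert] at hf hg
    rcases hf with rfl | rfl | hf <;> rcases hg with rfl | rfl | hg
    · rfl
    · rw [Sym2.mem_iff] at hwf hwg; grind
    · have := key g hg w hwg; rw [Sym2.mem_iff] at hwf; tauto
    · rw [Sym2.mem_iff] at hwf hwg; grind
    · rfl
    · have := key g hg w hwg; rw [Sym2.mem_iff] at hwf; tauto
    · have := key f hf w hwf; rw [Sym2.mem_iff] at hwg; tauto
    · have := key f hf w hwf; rw [Sym2.mem_iff] at hwg; tauto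
    · exact hmat f (hRM f hf).1 g (hRM g hg).1 w hwf hwg

lemma HasMatch.erase_of {m : ℕ} {E : Finset (Sym2 (Fin m))} {M : Finset (Sym2 (Fin m))} {s : ℕ}
    {e : Sym2 (Fin m)} (hM : M ⊆ E) (hs : M.card = s) (hmat : IsMatch M)
    (hno : ¬ HasMatch (E.erase e) s) : e ∈ M := by
  by_contra h
  apply hno
  refine ⟨M, fun f hf => Finset.mem_erase.2 ⟨?_, hM hf⟩, hs, hmat⟩
  rintro rfl
  exact h hf

lemma critical {m : ℕ} {E : Finset (Sym2 (Fin m))} (hE : ∀ e ∈ E, ¬ e.IsDiag) {s : ℕ} {u v : Fin m}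
    (huv : u ≠ v) (hmatch : HasMatch E s)
    (hno : ¬ HasMatch (E.erase s(u, v)) s) :
    ∃ E' ⊆ E.erase s(u, v), 1 ≤ s ∧ HasMatch E' (s - 1) ∧ E.card ≤ E'.card + 1 + 2 * (s - 1) ∧
      (∀ w ∈ supp E, w = u ∨ w = v ∨ w ∈ supp E') ∧ (supp E').card + 2 ≤ (supp E).card := by
  obtain ⟨M, hM, hs, hmat⟩ := hmatch
  have he : s(u, v) ∈ M := HasMatch.erase_of hM hs hmat hno
  have hvu : s(v, u) = s(u, v) := Sym2.eq_swap
  have hu : ∀ a, (∀ f ∈ M, a ∉ f) → s(u, a) ∉ E := swap_one hM hs hmat he hno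
  have hv : ∀ a, (∀ f ∈ M, a ∉ f) → s(v, a) ∉ E := by
    apply swap_one hM hs hmat (u := v) (v := u)
    · rwa [hvu]
    · rwa [hvu]
  have huv2 := swap_two huv hM hs hmat he hno
  set E' := E.filter (fun f => u ∉ f ∧ v ∉ f) with hE'
  have hdisj : ∀ f ∈ M.erase s(u, v), u ∉ f ∧ v ∉ f := by
    intro f hf
    obtain ⟨h1, h2⟩ := Finset.mem_erase.1 hf
    exact ⟨fun h => h1 (hmat f h2 _ he u h (by simp)), fun h => h1 (hmat f h2 _ he v h (by simp))⟩
  have hME' : M.erase s(u, v) ⊆ E' := by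
    intro f hf
    exact Finset.mem_filter.2 ⟨hM (Finset.mem_of_mem_erase hf), hdisj f hf⟩
  have hc := Finset.card_erase_add_one he
  have huE : u ∈ supp E := mem_supp.2 ⟨_, hM he, by simp⟩
  have hvE : v ∈ supp E := mem_supp.2 ⟨_, hM he, by simp⟩
  refine ⟨E', ?_, by omega, ?_, ?_, ?_, ?_⟩
  · intro f hf
    obtain ⟨h1, h2, h3⟩ := Finset.mem_filter.1 hf
    refine Finset.mem_erase.2 ⟨?_, h1⟩
    rintro rfl
    simp at h2
  · refine ⟨M.erase s(u, v), hME', by omega, ?_⟩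
    intro f hf g hg
    exact hmat f (Finset.mem_of_mem_erase hf) g (Finset.mem_of_mem_erase hg)
  · -- the counting
    let P : Sym2 (Fin m) → Finset (Sym2 (Fin m)) := fun f =>
      E.filter (fun g => g ≠ s(u, v) ∧ (u ∈ g ∨ v ∈ g) ∧ ∃ a ∈ f, a ∈ g)
    have hcover : E ⊆ (E' ∪ {s(u, v)}) ∪ (M.erase s(u, v)).biUnion P := by
      intro g hg
      by_cases h1 : g = s(u, v)
      · simp [h1]
      by_cases h2 : u ∉ g ∧ v ∉ g
      · simp [hE', hg, h2]
      have h3 : u ∈ g ∨ v ∈ g := by tauto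
      apply Finset.mem_union_right
      rw [Finset.mem_biUnion]
      have hx : ∃ a ∈ g, a ≠ u ∧ a ≠ v ∧ ∃ f ∈ M, a ∈ f := by
        rcases h3 with h3 | h3
        · obtain ⟨a, rfl⟩ := Sym2.mem_iff_exists.1 h3
          have hau : a ≠ u := by
            rintro rfl; exact hE _ hg (by simp)
          have hav : a ≠ v := by
            rintro rfl; exact h1 rfl
          refine ⟨a, by simp, hau, hav, ?_⟩
          by_contra hcon
          push Not at hcon
          exact hu a hcon hg
        · obtain ⟨a, rfl⟩ := Sym2.mem_iff_exists.1 h3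
          have hav : a ≠ v := by
            rintro rfl; exact hE _ hg (by simp)
          have hau : a ≠ u := by
            rintro rfl; exact h1 hvu
          refine ⟨a, by simp, hau, hav, ?_⟩
          by_contra hcon
          push Not at hcon
          exact hv a hcon hg
      obtain ⟨a, hag, hau, hav, f, hf, haf⟩ := hx
      refine ⟨f, Finset.mem_erase.2 ⟨?_, hf⟩, Finset.mem_filter.2 ⟨hg, h1, h3, a, haf, hag⟩⟩
      rintro rfl
      rw [Sym2.mem_iff] at haf
      tauto
    have hP : ∀ f ∈ M.erase s(u, v), (P f).card ≤ 2 := by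
      intro f hf
      induction f using Sym2.ind with
      | _ a b =>
      obtain ⟨hne, hfM⟩ := Finset.mem_erase.1 hf
      have hab : a ≠ b := by
        rintro rfl; exact hE _ (hM hfM) (by simp)
      have hba : s(b, a) = s(a, b) := Sym2.eq_swap
      have h1 := huv2 a b hab hfM hne
      have h2 := huv2 b a hab.symm (by rwa [hba]) (by rwa [hba])
      have hsub : P s(a, b) ⊆ (if s(u, a) ∈ E then {s(u, a)} else {s(v, b)}) ∪
          (if s(u, b) ∈ E then {s(u, b)} else {s(v, a)}) := by
        intro g hg
        obtain ⟨hgE, hg1, hg2, c, hc1, hc2⟩ := Finset.mem_filter.1 hg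
        have hd := hdisj _ hf
        simp only [Sym2.mem_iff, not_or] at hd hc1
        have hg' : g = s(u, c) ∨ g = s(v, c) := by
          rcases hg2 with h | h
          · left
            refine (Sym2.mem_and_mem_iff ?_).1 ⟨h, hc2⟩
            rintro rfl; tauto
          · right
            refine (Sym2.mem_and_mem_iff ?_).1 ⟨h, hc2⟩
            rintro rfl; tauto
        rcases hc1 with rfl | rfl <;> rcases hg' with rfl | rfl <;> rw [Finset.mem_union]
        · left; simp [hgE]
        · right
          rw [if_neg (fun h => h2 ⟨h, hgE⟩)]; simp
        · right; simp [hgE]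
        · left
          rw [if_neg (fun h => h1 ⟨h, hgE⟩)]; simp
      refine (Finset.card_le_card hsub).trans ((Finset.card_union_le _ _).trans ?_)
      split_ifs <;> simp
    have h1 := Finset.card_le_card hcover
    have h2 := Finset.card_union_le (E' ∪ {s(u, v)}) ((M.erase s(u, v)).biUnion P)
    have h3 := Finset.card_union_le E' {s(u, v)}
    have h4 := Finset.card_biUnion_le_card_mul _ P 2 hP
    rw [Finset.card_singleton] at h3
    have h5 : (M.erase s(u, v)).card = s - 1 := by omega
    rw [h5] at h4
    omega
  · intro w hw
    by_cases hwu : w = u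
    · exact Or.inl hwu
    by_cases hwv : w = v
    · exact Or.inr (Or.inl hwv)
    right; right
    by_cases hwM : ∃ f ∈ M, w ∈ f
    · obtain ⟨f, hf, hwf⟩ := hwM
      refine mem_supp.2 ⟨f, hME' (Finset.mem_erase.2 ⟨?_, hf⟩), hwf⟩
      rintro rfl
      rw [Sym2.mem_iff] at hwf
      tauto
    · push Not at hwM
      obtain ⟨g, hg, hwg⟩ := mem_supp.1 hw
      refine mem_supp.2 ⟨g, Finset.mem_filter.2 ⟨hg, ?_, ?_⟩, hwg⟩
      · intro hug
        rw [(Sym2.mem_and_mem_iff (Ne.symm hwu)).1 ⟨hug, hwg⟩] at hg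
        exact hu w hwM hg
      · intro hvg
        rw [(Sym2.mem_and_mem_iff (Ne.symm hwv)).1 ⟨hvg, hwg⟩] at hg
        exact hv w hwM hg
  · have hsub : supp E' ⊆ ((supp E).erase u).erase v := by
      intro w hw
      obtain ⟨f, hf, hwf⟩ := mem_supp.1 hw
      obtain ⟨h1, h2, h3⟩ := Finset.mem_filter.1 hf
      refine Finset.mem_erase.2 ⟨?_, Finset.mem_erase.2 ⟨?_, mem_supp.2 ⟨f, h1, hwf⟩⟩⟩
      · rintro rfl; exact h3 hwf
      · rintro rfl; exact h2 hwf
    have h1 := Finset.card_le_card hsub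
    have h2 := Finset.card_erase_add_one huE
    have h3 := Finset.card_erase_add_one (Finset.mem_erase.2 ⟨huv.symm, hvE⟩)
    omega

lemma match_le_supp {m : ℕ} {E : Finset (Sym2 (Fin m))} {s : ℕ} (h : HasMatch E s) :
    s ≤ (supp E).card := by
  obtain ⟨M, hM, rfl, hmat⟩ := h
  have hex : ∀ e : Sym2 (Fin m), ∃ v, v ∈ e := by
    intro e
    induction e using Sym2.ind with
    | _ a b => exact ⟨a, by simp⟩
  choose r hr using hex
  apply Finset.card_le_card_of_injOn r
  · intro e he
    exact mem_supp.2 ⟨e, hM he, hr e⟩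
  · intro e he f hf hef
    exact hmat e he f hf (r e) (hr e) (hef ▸ hr f)

/-! ### The main induction -/

lemma main_bound {m : ℕ} {p : ℝ} (h0 : 0 < p) (h1 : p < 1) (M N : ℕ) (hN : 1 ≤ N)
    {Q : List Bool → Sym2 ℕ} (hQ : ValidBuilder Q) (n : ℕ) :
    ∀ (E : Finset (Sym2 (Fin m))) (s : ℕ), E.card ≤ n → (∀ e ∈ E, ¬ e.IsDiag) → HasMatch E s →
    EX p M N Q E * p ^ (s * (s - 1)) ≤
      (2 * (m ^ 2 + 1) : ℝ) ^ n * N ^ ((supp E).card - s) * p ^ E.card := by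
  have hN' : (1 : ℝ) ≤ N := by exact_mod_cast hN
  have hN0 : (0 : ℝ) < N := by linarith
  set K : ℝ := 2 * (m ^ 2 + 1) with hK
  have hK1 : (1 : ℝ) ≤ K := by rw [hK]; nlinarith [sq_nonneg (m : ℝ)]
  have hempty : ∀ k s, HasMatch (∅ : Finset (Sym2 (Fin m))) s →
      EX p M N Q (∅ : Finset (Sym2 (Fin m))) * p ^ (s * (s - 1)) ≤
      K ^ k * N ^ ((supp (∅ : Finset (Sym2 (Fin m)))).card - s) *
        p ^ (∅ : Finset (Sym2 (Fin m))).card := by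
    intro k s hs
    have hsz : s = 0 := by
      have := match_le_supp hs
      simpa [supp] using this
    subst hsz
    have : EX p M N Q (∅ : Finset (Sym2 (Fin m))) ≤ 1 := by
      refine le_trans ?_ (le_of_eq (Ex_one p (N := N)))
      apply Ex_mono h0 h1
      intro x
      have : (cop M Q (extSeq x) N (∅ : Finset (Sym2 (Fin m)))).card ≤ 1 := by
        rw [Finset.card_le_one]
        intro φ hφ ψ hψ
        simp only [cop, Finset.mem_filter] at hφ hψ
        funext v
        rw [hφ.2.1 v (by simp [supp]), hψ.2.1 v (by simp [supp])]
      exact_mod_cast this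
    simpa [supp] using this.trans (one_le_pow₀ hK1)
  induction n with
  | zero =>
    intro E s hc _ hs
    have : E = ∅ := Finset.card_eq_zero.1 (by omega)
    subst this
    exact hempty 0 s hs
  | succ n ih =>
    intro E s hc hE hs
    rcases E.eq_empty_or_nonempty with rfl | hne
    · exact hempty _ s hs
    have hstep : ∀ e ∈ E, EY p M N Q E e * p ^ (s * (s - 1)) * p ≤
        2 * (K ^ n * N ^ ((supp E).card - s) * p ^ E.card) := by
      intro e he
      have hee := hE e he
      have hcard := Finset.card_erase_add_one he
      by_cases hm : HasMatch (E.erase e) s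
      · have IH := ih (E.erase e) s (by omega) (fun f hf => hE f (Finset.mem_of_mem_erase hf)) hm
        by_cases hsupp : supp (E.erase e) = supp E
        · have hY := EY_le_one h0 h1 M N hQ E e hsupp
          rw [hsupp] at IH
          calc EY p M N Q E e * p ^ (s * (s - 1)) * p
              ≤ EX p M N Q (E.erase e) * p ^ (s * (s - 1)) * p := by gcongr
            _ ≤ K ^ n * N ^ ((supp E).card - s) * p ^ (E.erase e).card * p := by gcongr
            _ = K ^ n * N ^ ((supp E).card - s) * p ^ E.card := by rw [← hcard]; ring
            _ ≤ _ := by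
              have : 0 ≤ K ^ n * N ^ ((supp E).card - s) * p ^ E.card := by positivity
              linarith
        · have hlt : (supp (E.erase e)).card < (supp E).card :=
            Finset.card_lt_card (Finset.ssubset_iff_subset_ne.2
              ⟨supp_mono (Finset.erase_subset _ _), hsupp⟩)
          have hsle := match_le_supp hm
          obtain ⟨d, hd⟩ : ∃ d, (supp E).card - s = (supp (E.erase e)).card - s + 1 + d :=
            ⟨(supp E).card - s - ((supp (E.erase e)).card - s + 1), by omega⟩
          have hY : EY p M N Q E e ≤ 2 * N * EX p M N Q (E.erase e) := by
            induction e using Sym2.ind with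
            | _ u v =>
            apply EY_le_two h0 h1 M N Q E _ u v (by simpa using hee) (subset_refl _)
            intro w hw
            obtain ⟨g, hg, hwg⟩ := mem_supp.1 hw
            by_cases hgu : g = s(u, v)
            · subst hgu
              rw [Sym2.mem_iff] at hwg
              tauto
            · right; right
              exact mem_supp.2 ⟨g, Finset.mem_erase.2 ⟨hgu, hg⟩, hwg⟩
          calc EY p M N Q E e * p ^ (s * (s - 1)) * p
              ≤ (2 * N * EX p M N Q (E.erase e)) * p ^ (s * (s - 1)) * p := by gcongr
            _ = 2 * N * (EX p M N Q (E.erase e) * p ^ (s * (s - 1))) * p := by ring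
            _ ≤ 2 * N * (K ^ n * N ^ ((supp (E.erase e)).card - s) * p ^ (E.erase e).card) * p := by
              gcongr
            _ = 2 * (K ^ n * N ^ ((supp (E.erase e)).card - s + 1) * p ^ E.card) := by
              rw [← hcard]; ring
            _ ≤ _ := by
              rw [hd]
              gcongr 2 * (K ^ n * ?_ * _)
              exact pow_le_pow_right₀ hN' (by omega)
      · induction e using Sym2.ind with
        | _ u v =>
        have huv : u ≠ v := by simpa using hee
        obtain ⟨E', hsub, hs1, hm', hcE, hsp, hspc⟩ := critical hE huv hs hm
        have hc' := Finset.card_le_card hsub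
        have IH := ih E' (s - 1) (by omega)
          (fun f hf => hE f (Finset.mem_of_mem_erase (hsub hf))) hm'
        have hY := EY_le_two h0 h1 M N Q E E' u v huv hsub hsp
        have hsle := match_le_supp hm'
        obtain ⟨d, hd⟩ : ∃ d, (supp E).card - s = (supp E').card - (s - 1) + 1 + d :=
          ⟨(supp E).card - s - ((supp E').card - (s - 1) + 1), by omega⟩
        have hss : s * (s - 1) = (s - 1) * (s - 1 - 1) + 2 * (s - 1) := by
          obtain ⟨k, rfl⟩ : ∃ k, s = k + 1 := ⟨s - 1, by omega⟩
          simp only [Nat.add_sub_cancel]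
          cases k with
          | zero => rfl
          | succ j => simp only [Nat.add_sub_cancel]; ring
        calc EY p M N Q E s(u, v) * p ^ (s * (s - 1)) * p
            ≤ (2 * N * EX p M N Q E') * p ^ (s * (s - 1)) * p := by gcongr
          _ = 2 * N * (EX p M N Q E' * p ^ ((s - 1) * (s - 1 - 1))) * p ^ (2 * (s - 1) + 1) := by
            rw [hss]; ring
          _ ≤ 2 * N * (K ^ n * N ^ ((supp E').card - (s - 1)) * p ^ E'.card) *
              p ^ (2 * (s - 1) + 1) := by gcongr
          _ = 2 * (K ^ n * N ^ ((supp E').card - (s - 1) + 1) * p ^ (E'.card + 1 + 2 * (s - 1))) := by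
            ring
          _ ≤ _ := by
            rw [hd]
            gcongr 2 * (K ^ n * ?_ * ?_)
            · exact pow_le_pow_right₀ hN' (by omega)
            · exact pow_le_pow_of_le_one h0.le h1.le hcE
    have hEm : (E.card : ℝ) ≤ m ^ 2 + 1 := by
      have hle : E.card ≤ Fintype.card (Sym2 (Fin m)) := Finset.card_le_univ E
      rw [Sym2.card, Fintype.card_fin] at hle
      have : (m + 1).choose 2 ≤ m ^ 2 + 1 := by
        rw [Nat.choose_two_right]
        apply Nat.div_le_of_le_mul
        simp only [Nat.add_sub_cancel]
        nlinarith
      exact_mod_cast hle.trans this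
    calc EX p M N Q E * p ^ (s * (s - 1))
        ≤ (p * ∑ e ∈ E, EY p M N Q E e) * p ^ (s * (s - 1)) := by
          gcongr
          exact EX_le h0 h1 M N Q E hne
      _ = ∑ e ∈ E, EY p M N Q E e * p ^ (s * (s - 1)) * p := by
          rw [Finset.mul_sum, Finset.sum_mul]
          apply Finset.sum_congr rfl
          intro e _; ring
      _ ≤ ∑ e ∈ E, 2 * (K ^ n * N ^ ((supp E).card - s) * p ^ E.card) := Finset.sum_le_sum hstep
      _ = E.card * (2 * (K ^ n * N ^ ((supp E).card - s) * p ^ E.card)) := by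
          rw [Finset.sum_const, nsmul_eq_mul]
      _ ≤ (m ^ 2 + 1) * (2 * (K ^ n * N ^ ((supp E).card - s) * p ^ E.card)) := by gcongr
      _ = _ := by rw [pow_succ K n]; conv_rhs => rw [hK]
                  ring
/-! ### Some strategy succeeds -/

lemma sum_all_true (p : ℝ) (B : ℕ) :
    ∑ z : Fin B → Bool, weight p z * (1 - ∏ j, if z j = true then (1 : ℝ) else 0) = 1 - p ^ B := by
  have h1 := Ex_one p (N := B)
  unfold Ex at h1
  simp only [mul_one] at h1
  have h2 : ∑ z : Fin B → Bool, weight p z * (∏ j, if z j = true then (1 : ℝ) else 0) = p ^ B := by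
    have := Finset.prod_univ_sum (fun _ : Fin B => (Finset.univ : Finset Bool))
      (fun _ b => (if b = true then p else 1 - p) * (if b = true then (1 : ℝ) else 0))
    simp only [Fintype.piFinset_univ] at this
    unfold weight
    simp only [← Finset.prod_mul_distrib]
    rw [← this]
    simp
  simp only [mul_sub, mul_one, Finset.sum_sub_distrib, h1, h2]

lemma block_sum (p : ℝ) (n B : ℕ) :
    Ex p (fun x : Fin (n * B) → Bool => ∏ k : Fin n,
      (1 - ∏ j : Fin B, if x (finProdFinEquiv (k, j)) = true then (1 : ℝ) else 0)) =
      (1 - p ^ B) ^ n := by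
  have h := Finset.prod_univ_sum (fun _ : Fin n => (Finset.univ : Finset (Fin B → Bool)))
      (fun _ z => weight p z * (1 - ∏ j, if z j = true then (1 : ℝ) else 0))
  simp only [Fintype.piFinset_univ, sum_all_true, Finset.prod_const, Finset.card_univ,
    Fintype.card_fin] at h
  rw [h]
  unfold Ex
  let e : (Fin (n * B) → Bool) ≃ (Fin n → Fin B → Bool) :=
    (finProdFinEquiv.arrowCongr (Equiv.refl Bool)).symm.trans (Equiv.curry _ _ _)
  have he : ∀ x k j, e x k j = x (finProdFinEquiv (k, j)) := by
    intro x k j; rfl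
  apply Fintype.sum_equiv e
  intro x
  rw [Finset.prod_mul_distrib]
  simp only [he]
  congr 1
  unfold weight
  simp only [he]
  rw [← Fintype.prod_prod_type' (f := fun k j => if x (finProdFinEquiv (k, j)) = true then p else 1 - p)]
  symm
  apply Fintype.prod_equiv finProdFinEquiv
  intro y
  rfl

lemma exists_strategy (m : ℕ) (hm : 3 ≤ m) {p : ℝ} (h0 : 0 < p) (h1 : p < 1) :
    ∃ N, ∃ Q : List Bool → Sym2 ℕ, ValidBuilder Q ∧ (1 : ℝ) / 2 ≤ queryProb (K m) Q N p := by
  let V0 := {e : Sym2 (Fin m) // ¬ e.IsDiag}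
  obtain ⟨B, ⟨ε⟩⟩ : ∃ B, Nonempty (Fin B ≃ V0) := ⟨Fintype.card V0, ⟨(Fintype.equivFin V0).symm⟩⟩
  have hB : 0 < B := by
    have a : V0 := ⟨s(⟨0, by omega⟩, ⟨1, by omega⟩), by simp⟩
    exact Fin.pos (ε.symm a)
  let sh : ℕ → Fin m → ℕ := fun k v => (v : ℕ) + m * k
  have hshinj : ∀ k, Function.Injective (sh k) := by
    intro k u v huv
    simp only [sh] at huv
    exact Fin.ext (by omega)
  let ed : ℕ → Sym2 ℕ := fun t => Sym2.map (sh (t / B)) (ε ⟨t % B, Nat.mod_lt _ hB⟩).1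
  have hed : Function.Injective ed := by
    intro t t' htt
    have hk : t / B = t' / B := by
      obtain ⟨v, hv⟩ : ∃ v, v ∈ (ε ⟨t % B, Nat.mod_lt _ hB⟩).1 := by
        induction (ε ⟨t % B, Nat.mod_lt _ hB⟩).1 using Sym2.ind with
        | _ a b => exact ⟨a, by simp⟩
      have h2 : sh (t / B) v ∈ ed t := Sym2.mem_map.2 ⟨v, hv, rfl⟩
      rw [htt] at h2
      obtain ⟨w, _, hw⟩ := Sym2.mem_map.1 h2
      simp only [sh] at hw
      have e1 : ((v : ℕ) + m * (t / B)) / m = t / B := by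
        rw [Nat.add_mul_div_left _ _ (by omega), Nat.div_eq_of_lt v.2, zero_add]
      have e2 : ((w : ℕ) + m * (t' / B)) / m = t' / B := by
        rw [Nat.add_mul_div_left _ _ (by omega), Nat.div_eq_of_lt w.2, zero_add]
      rw [← e1, ← e2, hw]
    simp only [ed] at htt
    rw [hk] at htt
    have h3 := ε.injective (Subtype.ext (Sym2.map.injective (hshinj _) htt))
    have h4 : t % B = t' % B := congrArg Fin.val h3
    rw [← Nat.div_add_mod t B, ← Nat.div_add_mod t' B, hk, h4]
  have hpB : 0 < p ^ B := by positivity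
  have hpB1 : p ^ B ≤ 1 := pow_le_one₀ h0.le h1.le
  obtain ⟨n, hn⟩ := exists_pow_lt_of_lt_one (show (0 : ℝ) < 1 / 2 by norm_num)
    (show 1 - p ^ B < 1 by linarith)
  refine ⟨n * B, fun h => ed h.length, ⟨?_, ?_⟩, ?_⟩
  · intro h hd
    simp only [ed] at hd
    rw [Sym2.isDiag_map (hshinj _)] at hd
    exact (ε _).2 hd
  · intro h i hi heq
    have := hed heq
    rw [List.length_take] at this
    omega
  · have hle : Ex p (fun x : Fin (n * B) → Bool => (1 : ℝ) - ∏ k : Fin n,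
        (1 - ∏ j : Fin B, if x (finProdFinEquiv (k, j)) = true then (1 : ℝ) else 0)) ≤
        queryProb (K m) (fun h => ed h.length) (n * B) p := by
      apply Ex_mono h0 h1
      intro x
      have hprod : ∀ k : Fin n, (0 : ℝ) ≤
          1 - ∏ j : Fin B, if x (finProdFinEquiv (k, j)) = true then (1 : ℝ) else 0 := by
        intro k
        rw [sub_nonneg]
        apply Finset.prod_le_one
        · intro j _; split_ifs <;> norm_num
        · intro j _; split_ifs <;> norm_num
      split_ifs with hC
      · have := Finset.prod_nonneg (s := Finset.univ) (fun k _ => hprod k)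
        linarith
      · apply le_of_eq
        rw [sub_eq_zero, eq_comm]
        apply Finset.prod_eq_one
        intro k _
        rw [sub_eq_self]
        by_contra hne
        apply hC
        have hall : ∀ j : Fin B, x (finProdFinEquiv (k, j)) = true := by
          intro j
          by_contra hj
          apply hne
          apply Finset.prod_eq_zero (Finset.mem_univ j)
          rw [if_neg hj]
        refine ⟨sh k, hshinj k, ?_⟩
        intro u v huv
        have huv : u ≠ v := huv.ne
        let e0 : V0 := ⟨s(u, v), by simpa using huv⟩
        let j := ε.symm e0
        have hlt := (finProdFinEquiv (k, j)).2
        have hval : ((finProdFinEquiv (k, j) : Fin (n * B)) : ℕ) = j + B * k := rfl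
        refine ⟨(finProdFinEquiv (k, j) : Fin (n * B)), hlt, ?_, ?_⟩
        · have hlen : (histSeq (extSeq x) (finProdFinEquiv (k, j) : Fin (n * B))).length =
              j + B * k := by
            simp [histSeq, hval]
          change ed (histSeq (extSeq x) (finProdFinEquiv (k, j) : Fin (n * B))).length = _
          rw [hlen]
          have d1 : ((j : ℕ) + B * k) / B = k := by
            rw [Nat.add_mul_div_left _ _ hB, Nat.div_eq_of_lt j.2, zero_add]
          have d2 : ((j : ℕ) + B * k) % B = j := by
            rw [Nat.add_mul_mod_self_left, Nat.mod_eq_of_lt j.2]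
          simp only [ed, d1, d2]
          simp [j, e0]
        · unfold extSeq
          rw [dif_pos hlt]
          exact hall j
    have hval : Ex p (fun x : Fin (n * B) → Bool => (1 : ℝ) - ∏ k : Fin n,
        (1 - ∏ j : Fin B, if x (finProdFinEquiv (k, j)) = true then (1 : ℝ) else 0)) =
        1 - (1 - p ^ B) ^ n := by
      have e1 := block_sum p n B
      have e2 := Ex_one p (N := n * B)
      rw [← e1]
      refine Eq.trans ?_ (congrArg (fun z => z - _) e2)
      unfold Ex
      simp only
      rw [← Finset.sum_sub_distrib]
      apply Finset.sum_congr rfl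
      intro x _
      ring
    rw [hval] at hle
    linarith

/-! ### Conclusion -/

lemma queryProb_le_EX (m : ℕ) (hm : 3 ≤ m) {p : ℝ} (h0 : 0 < p) (h1 : p < 1) (N : ℕ)
    (Q : List Bool → Sym2 ℕ) :
    ∃ M, queryProb (K m) Q N p ≤
      EX p M N Q (Finset.univ.filter (fun e : Sym2 (Fin m) => ¬ e.IsDiag)) := by
  have hF : ∀ x : Fin N → Bool, ∃ f : Fin m → ℕ,
      ContainsCopy (K m) (fun t => Q (histSeq (extSeq x) t)) (extSeq x) N →
      Function.Injective f ∧ ∀ u v : Fin m, (K m).Adj u v → ∃ t, t < N ∧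
        Q (histSeq (extSeq x) t) = s(f u, f v) ∧ extSeq x t = true := by
    intro x
    by_cases h : ContainsCopy (K m) (fun t => Q (histSeq (extSeq x) t)) (extSeq x) N
    · obtain ⟨f, hf⟩ := h
      exact ⟨f, fun _ => hf⟩
    · exact ⟨fun _ => 0, fun h' => absurd h' h⟩
  choose F hF using hF
  refine ⟨(∑ x, ∑ v, F x v) + 1, ?_⟩
  apply Ex_mono h0 h1
  intro x
  split_ifs with hC
  · obtain ⟨hinj, hf⟩ := hF x hC
    have hmem : F x ∈ cop ((∑ x, ∑ v, F x v) + 1) Q (extSeq x) N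
        (Finset.univ.filter (fun e : Sym2 (Fin m) => ¬ e.IsDiag)) := by
      simp only [cop, Finset.mem_filter]
      refine ⟨?_, ?_, ?_, ?_⟩
      · simp only [Fintype.mem_piFinset, Finset.mem_range]
        intro v
        have e1 : F x v ≤ ∑ v, F x v :=
          Finset.single_le_sum (f := fun v => F x v) (fun _ _ => Nat.zero_le _) (Finset.mem_univ v)
        have e2 : ∑ v, F x v ≤ ∑ x, ∑ v, F x v :=
          Finset.single_le_sum (f := fun x => ∑ v, F x v) (fun _ _ => Nat.zero_le _)
            (Finset.mem_univ x)
        omega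
      · intro v hv
        exfalso
        apply hv
        obtain ⟨w, hw⟩ : ∃ w : Fin m, v ≠ w := by
          by_cases h : v = ⟨0, by omega⟩
          · exact ⟨⟨1, by omega⟩, by rw [h]; simp⟩
          · exact ⟨_, h⟩
        exact mem_supp.2 ⟨s(v, w), by simpa using hw, by simp⟩
      · exact (Sym2.map.injective hinj).injOn
      · intro e he
        induction e using Sym2.ind with
        | _ u v =>
        have huv : u ≠ v := by simpa using he
        exact hf u v (by simpa using huv)
    have : 1 ≤ (cop ((∑ x, ∑ v, F x v) + 1) Q (extSeq x) N
        (Finset.univ.filter (fun e : Sym2 (Fin m) => ¬ e.IsDiag))).card :=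
      Finset.card_pos.2 ⟨_, hmem⟩
    exact_mod_cast this
  · positivity

lemma full_match (m r : ℕ) (h : 2 * r ≤ m) :
    HasMatch (Finset.univ.filter (fun e : Sym2 (Fin m) => ¬ e.IsDiag)) r := by
  let g : Fin r → Sym2 (Fin m) := fun i =>
    s(⟨2 * i, by have := i.2; omega⟩, ⟨2 * i + 1, by have := i.2; omega⟩)
  have hg : ∀ i j v, v ∈ g i → v ∈ g j → i = j := by
    intro i j v hi hj
    simp only [g, Sym2.mem_iff, Fin.ext_iff] at hi hj
    exact Fin.ext (by omega)
  have hginj : Function.Injective g := by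
    intro i j hij
    exact hg i j ⟨2 * i, by have := i.2; omega⟩ (by simp [g]) (by rw [← hij]; simp [g])
  refine ⟨Finset.univ.image g, ?_, ?_, ?_⟩
  · intro e he
    obtain ⟨i, _, rfl⟩ := Finset.mem_image.1 he
    simp [g]
  · rw [Finset.card_image_of_injective _ hginj, Finset.card_univ, Fintype.card_fin]
  · intro e he f hf v hve hvf
    obtain ⟨i, _, rfl⟩ := Finset.mem_image.1 he
    obtain ⟨j, _, rfl⟩ := Finset.mem_image.1 hf
    rw [hg i j v hve hvf]

lemma full_card (m : ℕ) :
    (Finset.univ.filter (fun e : Sym2 (Fin m) => ¬ e.IsDiag)).card = m.choose 2 := by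
  rw [← Fintype.card_subtype, Sym2.card_subtype_not_diag, Fintype.card_fin]

lemma arith (m r : ℕ) (hm : 3 ≤ m) (hr : r = ⌊(1 - Real.sqrt 2 / 2) * (m : ℝ)⌋₊) :
    2 * r ≤ m ∧ ((2 - Real.sqrt 2) * (m : ℝ) - 2) * ((m - r : ℕ) : ℝ) ≤
      ((m.choose 2 : ℕ) : ℝ) - ((r * (r - 1) : ℕ) : ℝ) := by
  set q := Real.sqrt 2 with hq
  have hq2 : q * q = 2 := Real.mul_self_sqrt (by norm_num)
  have hq0 : 0 ≤ q := Real.sqrt_nonneg 2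
  have hq1 : 1 ≤ q := by nlinarith
  have hq3 : q ≤ 2 := by nlinarith
  have hm' : (3 : ℝ) ≤ m := by exact_mod_cast hm
  have hnn : 0 ≤ (1 - q / 2) * (m : ℝ) := mul_nonneg (by linarith) (by linarith)
  have hr1 : (r : ℝ) ≤ (1 - q / 2) * m := by rw [hr]; exact Nat.floor_le hnn
  have hr2 : (1 - q / 2) * (m : ℝ) < r + 1 := by rw [hr]; exact Nat.lt_floor_add_one _
  have hrm : 2 * (r : ℝ) ≤ m := by nlinarith
  have hrm' : 2 * r ≤ m := by exact_mod_cast hrm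
  refine ⟨hrm', ?_⟩
  have c1 : ((m.choose 2 : ℕ) : ℝ) = m * (m - 1) / 2 := Nat.cast_choose_two ℝ m
  have c2 : ((r * (r - 1) : ℕ) : ℝ) = r * (r - 1) := by
    cases r with
    | zero => simp
    | succ k => push_cast [Nat.add_sub_cancel]; ring
  rw [c1, c2, Nat.cast_sub (by omega)]
  obtain ⟨θ, hθ⟩ : ∃ θ : ℝ, (r : ℝ) = (1 - q / 2) * m - θ := ⟨(1 - q / 2) * m - r, by ring⟩
  have t0 : 0 ≤ θ := by linarith
  have t1 : θ ≤ 1 := by linarith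
  have key : (m : ℝ) * (m - 1) / 2 - r * (r - 1) - ((2 - q) * m - 2) * (m - r) =
      3 * m / 2 - r - θ ^ 2 := by
    have : (m : ℝ) * (m - 1) / 2 - r * (r - 1) - ((2 - q) * m - 2) * (m - r) -
      (3 * m / 2 - r - θ ^ 2) = 0 := by
      rw [hθ]
      linear_combination (-(m : ℝ) ^ 2 / 4) * hq2 * (-1)
    linarith
  nlinarith

theorem stmt9 :
    ∃ C : ℝ, 0 < C ∧ ∀ m : ℕ, 3 ≤ m → ∃ c : ℝ, 0 < c ∧
      ∀ p : ℝ, p ∈ Set.Ioo (0 : ℝ) 1 →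
        c * p ^ (-((2 - Real.sqrt 2) * (m : ℝ) - C)) ≤ (fQuery (K m) p : ℝ) := by
  refine ⟨2, by norm_num, ?_⟩
  intro m hm
  obtain ⟨r, hr⟩ : ∃ r, r = ⌊(1 - Real.sqrt 2 / 2) * (m : ℝ)⌋₊ := ⟨_, rfl⟩
  obtain ⟨hrm, hineq⟩ := arith m r hm hr
  set E := Finset.univ.filter (fun e : Sym2 (Fin m) => ¬ e.IsDiag) with hE
  have hEc : E.card = m.choose 2 := full_card m
  set D : ℝ := (2 * (m ^ 2 + 1) : ℝ) ^ E.card with hD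
  have hD1 : 1 ≤ D := one_le_pow₀ (by nlinarith [sq_nonneg (m : ℝ)])
  set ℓ : ℝ := (2 - Real.sqrt 2) * (m : ℝ) - 2 with hℓ
  refine ⟨1 / (4 * D), by positivity, ?_⟩
  rintro p ⟨h0, h1⟩
  set c : ℝ := 1 / (4 * D) with hc
  have hc0 : 0 < c := by positivity
  have hc1 : c ≤ 1 := by
    rw [hc, div_le_one (by positivity)]; linarith
  obtain ⟨Q, hQ, hprob⟩ : fQuery (K m) p ∈
      {N | ∃ Q : List Bool → Sym2 ℕ, ValidBuilder Q ∧ (1 : ℝ) / 2 ≤ queryProb (K m) Q N p} :=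
    Nat.sInf_mem (exists_strategy m hm h0 h1)
  generalize fQuery (K m) p = N at hprob
  have hN : 1 ≤ N := by
    by_contra hN
    have hN0 : N = 0 := by omega
    subst hN0
    have : queryProb (K m) Q 0 p = 0 := by
      unfold queryProb
      apply Finset.sum_eq_zero
      intro x _
      rw [if_neg, mul_zero]
      rintro ⟨f, _, hf⟩
      obtain ⟨t, ht, _⟩ := hf ⟨0, by omega⟩ ⟨1, by omega⟩ (by simp)
      omega
    rw [this] at hprob
    norm_num at hprob
  have hN' : (1 : ℝ) ≤ N := by exact_mod_cast hN
  obtain ⟨M, hM⟩ := queryProb_le_EX m hm h0 h1 N Q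
  have hb := main_bound h0 h1 M N hN hQ E.card E r le_rfl
    (by intro e he; exact (Finset.mem_filter.1 he).2) (full_match m r hrm)
  by_contra hlt
  push Not at hlt
  set d := m - r with hd
  have hd1 : 1 ≤ d := by omega
  have hsupp : (supp E).card ≤ m := by
    simpa using Finset.card_le_univ (supp E)
  have hP0 : 0 < p ^ (r * (r - 1)) := by positivity
  have hNd : (N : ℝ) ^ d ≤ c * p ^ (-(ℓ * d)) := by
    calc (N : ℝ) ^ d ≤ (c * p ^ (-ℓ)) ^ d := by gcongr
      _ = c ^ d * p ^ (-(ℓ * d)) := by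
        rw [mul_pow, ← Real.rpow_natCast (p ^ (-ℓ)) d, ← Real.rpow_mul h0.le, neg_mul]
      _ ≤ c * p ^ (-(ℓ * d)) := by
        gcongr
        exact pow_le_of_le_one hc0.le hc1 (by omega)
  have hpp : p ^ (-(ℓ * d)) * p ^ E.card ≤ p ^ (r * (r - 1)) := by
    rw [← Real.rpow_natCast p E.card, ← Real.rpow_natCast p (r * (r - 1)), ← Real.rpow_add h0]
    apply Real.rpow_le_rpow_of_exponent_ge h0 h1.le
    rw [hEc]
    linarith
  have hfin : 1 / 2 * p ^ (r * (r - 1)) ≤ D * (c * p ^ (r * (r - 1))) := by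
    calc 1 / 2 * p ^ (r * (r - 1)) ≤ EX p M N Q E * p ^ (r * (r - 1)) := by
          gcongr; exact hprob.trans hM
      _ ≤ D * N ^ ((supp E).card - r) * p ^ E.card := hb
      _ ≤ D * N ^ d * p ^ E.card := by
          gcongr D * ?_ * _
          exact pow_le_pow_right₀ hN' (by omega)
      _ ≤ D * (c * p ^ (-(ℓ * d))) * p ^ E.card := by gcongr
      _ = D * (c * (p ^ (-(ℓ * d)) * p ^ E.card)) := by ring
      _ ≤ _ := by gcongr
  have hDc : D * c = 1 / 4 := by
    rw [hc]; field_simp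
  rw [← mul_assoc, hDc] at hfin
  linarith

end OnlineRamseyGame
end
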